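/- Let M : S → ℂ with M(1) = 1, let L be its admissible cumulants, and let W be a weight function on S with W(1) = 1 and W(st) = W(ts) for all s,t ∈ S, and let Q > 1/2. If ‖M{z,w}‖_W < 2 − 1/Q and ‖L{z,0}‖_W < ∞, then all terms of the identity L{z,w} = L{z,0} + (M_⋆{z,w} − M{z,0}) ⋆ M_⋆^{−1}{z,w} have finite ‖·‖_{W̃}-norm, where W̃(s) = W(s)Q^{−m(s)} and m(s) is the number of occurrences of w in s; in particular ‖M_⋆^{−1}{z,w}‖_{W̃} ≤ Q, ‖M_⋆{z,w}‖_{W̃} < 2 − 1/Q, L{z,w} ∈ l¹(S,W̃), and the identity holds in the Banach algebra l¹(S,W̃). -/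

import Mathlib

/-- The two-letter alphabet `{z, w}`. -/
inductive Letter | z | w
deriving DecidableEq

/-- Words: elements of the free monoid `S = FS({z,w})`. -/
abbrev Word := List Letter

/-- The convolution product of the semigroup algebra `A(S)`:
`(f ⋆ g)(s) = Σ_{uv = s} f(u) g(v)`. -/
noncomputable def conv (f g : Word → ℂ) (s : Word) : ℂ :=
  ∑ i ∈ Finset.range (s.length + 1), f (s.take i) * g (s.drop i)

open scoped ENNReal

/-- The weighted `l¹`-norm `‖f‖_W = Σ_{s ∈ S} W(s)|f(s)|`, valued in `[0,∞]`. -/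
noncomputable def normW (W : Word → ℝ) (f : Word → ℂ) : ℝ≥0∞ :=
  ∑' s : Word, ENNReal.ofReal (W s * ‖f s‖)

/-- `G` is the prefix-accumulating form of the composition `f_{⋆g}` of Definition 6.2:
`G(pre, s) = f(pre ++ s)` if `s` has no `w`, and if `s = z^a w^k rest` with `k ≥ 1`
maximal, the leading `z`-run of `s` is split in all possible ways, each removed part
`z^{a-c}` contributing a factor `g(z^{a-c})`.  Then `f_{⋆g}(s) = G([], s)`. -/
def IsStarAux (f g : Word → ℂ) (G : Word → Word → ℂ) : Prop :=
  (∀ pre s : Word, Letter.w ∉ s → G pre s = f (pre ++ s)) ∧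
    ∀ (pre : Word) (a k : ℕ) (rest : Word), 1 ≤ k → rest.head? ≠ some Letter.w →
      G pre (List.replicate a Letter.z ++ List.replicate k Letter.w ++ rest) =
        ∑ c ∈ Finset.range (a + 1),
          g (List.replicate (a - c) Letter.z) *
            G (pre ++ List.replicate c Letter.z ++ List.replicate k Letter.w) rest

/-- `n(s)! = n₁!n₂!⋯n_p!` for `s = z^{n₁} w^{k₁} z^{n₂} ⋯ w^{k_{p−1}} z^{n_p}`:
the product of the factorials of the lengths of the maximal `z`-runs of `s`. -/
def nFact (s : Word) : ℕ :=
  ((s.splitOn Letter.w).map fun r => r.length.factorial).prod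

/-- `s` is a partition of the index set of a word into blocks; see `IsCumulants`. -/
def letterAt (s : Word) (j : ℕ) : Letter := s.getD j Letter.z

/-- `P` is a partition of the finite set of positions `g ⊆ ℕ` into nonempty blocks. -/
def IsPartitionOn (g : Finset ℕ) (P : Finset (Finset ℕ)) : Prop :=
  (∀ b ∈ P, b.Nonempty) ∧ (P : Set (Finset ℕ)).PairwiseDisjoint id ∧ P.sup id = g

/-- The position `j` is inner with respect to the block `b`. -/
def InnerPos (j : ℕ) (b : Finset ℕ) : Prop :=
  j ∉ b ∧ ∃ i ∈ b, ∃ k ∈ b, i < j ∧ j < k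

/-- A partition is admissible if no block contains a letter `w` that is inner
with respect to another block. -/
def Admissible (s : Word) (P : Finset (Finset ℕ)) : Prop :=
  ∀ b ∈ P, ∀ b' ∈ P, b ≠ b' → ∀ j ∈ b, letterAt s j = Letter.w → ¬ InnerPos j b'

open scoped Classical in
/-- The set `AP(s)` of admissible partitions of the positions `g` of the word `s`. -/
noncomputable def APfin (s : Word) (g : Finset ℕ) : Finset (Finset (Finset ℕ)) :=
  g.powerset.powerset.filter fun P => IsPartitionOn g P ∧ Admissible s P

/-- The subword of `s` determined by a set of positions `b`. -/
def wordOf (s : Word) (b : Finset ℕ) : Word :=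
  (b.sort (· ≤ ·)).map (letterAt s)

/-- `L` is the family of admissible cumulants of the moment function `M`. -/
def IsCumulants (M L : Word → ℂ) : Prop :=
  ∀ s : Word, s ≠ [] →
    M s = ∑ P ∈ APfin s (Finset.range s.length), ∏ b ∈ P, L (wordOf s b)

/-- The moment generating function `M{z,w}(s) = M(s)/n(s)!`. -/
noncomputable def genFun (M : Word → ℂ) (s : Word) : ℂ := M s / (nFact s : ℂ)

open scoped Classical in
/-- The restriction `f{z,0}` of `f` to `S(z)`, extended by `0`. -/
noncomputable def restrZ (f : Word → ℂ) (s : Word) : ℂ :=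
  if Letter.w ∈ s then 0 else f s

open scoped Classical in
/-- `δf = f − f{z,0}`. -/
noncomputable def deltaF (f : Word → ℂ) (s : Word) : ℂ :=
  if Letter.w ∈ s then f s else 0

section
open Finset

/-! ### Words and convolution -/

/-- The word `z^n`. -/
abbrev zs (n : ℕ) : Word := List.replicate n Letter.z

theorem word_cases (s : Word) : (∃ a, s = zs a) ∨ ∃ a t, s = zs a ++ Letter.w :: t := by
  induction s with
  | nil => exact Or.inl ⟨0, rfl⟩
  | cons x s ih =>
    cases x with
    | w => exact Or.inr ⟨0, s, rfl⟩
    | z =>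
      rcases ih with ⟨a, rfl⟩ | ⟨a, t, rfl⟩
      · exact Or.inl ⟨a + 1, rfl⟩
      · exact Or.inr ⟨a + 1, t, rfl⟩

theorem word_induct {P : Word → Prop} (h0 : ∀ a, P (zs a))
    (h1 : ∀ a t, P t → P (zs a ++ Letter.w :: t)) (s : Word) : P s := by
  induction hn : s.length using Nat.strong_induction_on generalizing s with
  | _ n ih =>
    rcases word_cases s with ⟨a, rfl⟩ | ⟨a, t, rfl⟩
    · exact h0 a
    · exact h1 a t (ih t.length (by rw [← hn]; simp; omega) t rfl)

theorem w_notMem_zs (a : ℕ) : Letter.w ∉ zs a := by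
  simp [zs, List.mem_replicate]

theorem zs_succ (a : ℕ) : zs (a + 1) = Letter.z :: zs a := rfl

theorem zs_add (a b : ℕ) : zs (a + b) = zs a ++ zs b := by
  simp [zs]

theorem zs_of_notMem {s : Word} (h : Letter.w ∉ s) : s = zs s.length := by
  rcases word_cases s with ⟨a, rfl⟩ | ⟨a, t, rfl⟩
  · simp
  · simp at h

theorem conv_nil (f g : Word → ℂ) : conv f g [] = f [] * g [] := by
  simp [conv]

theorem conv_cons (f g : Word → ℂ) (x : Letter) (s : Word) :
    conv f g (x :: s) = f [] * g (x :: s) + conv (fun t => f (x :: t)) g s := by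
  unfold conv
  rw [List.length_cons, Finset.sum_range_succ', add_comm]
  simp

theorem conv_add_left (f f' g : Word → ℂ) (s : Word) :
    conv (fun t => f t + f' t) g s = conv f g s + conv f' g s := by
  simp [conv, add_mul, Finset.sum_add_distrib]

theorem conv_smul_left (c : ℂ) (f g : Word → ℂ) (s : Word) :
    conv (fun t => c * f t) g s = c * conv f g s := by
  simp [conv, mul_assoc, Finset.mul_sum]

theorem conv_assoc (f g h : Word → ℂ) (s : Word) :
    conv (conv f g) h s = conv f (conv g h) s := by
  induction s generalizing f with
  | nil => simp [conv_nil, mul_assoc]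
  | cons x s ih =>
    rw [conv_cons, conv_cons f (conv g h), conv_cons g h, conv_nil]
    simp_rw [conv_cons f g]
    rw [conv_add_left, conv_smul_left, ih]
    ring

theorem conv_congr {f f' g g' : Word → ℂ} (hf : ∀ s, f s = f' s) (hg : ∀ s, g s = g' s)
    (s : Word) : conv f g s = conv f' g' s := by
  rw [funext hf, funext hg]

theorem conv_one (f g : Word → ℂ) (hg : ∀ s, g s = if s = [] then 1 else 0) (s : Word) :
    conv f g s = f s := by
  induction s generalizing f with
  | nil => simp [conv_nil, hg]
  | cons x s ih => rw [conv_cons, ih, hg]; simp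

theorem conv_zs_append (f g : Word → ℂ) (a : ℕ) (t : Word) :
    conv f g (zs a ++ Letter.w :: t) =
      ∑ p ∈ antidiagonal a, f (zs p.1) * g (zs p.2 ++ Letter.w :: t) +
        conv (fun x => f (zs a ++ Letter.w :: x)) g t := by
  induction a generalizing f with
  | zero => simp [conv_cons]
  | succ a ih =>
    rw [zs_succ, List.cons_append, conv_cons, ih, Finset.Nat.sum_antidiagonal_succ]
    simp [List.replicate_succ, add_assoc]

theorem conv_zs (f g : Word → ℂ) (a : ℕ) :
    conv f g (zs a) = ∑ p ∈ antidiagonal a, f (zs p.1) * g (zs p.2) := by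
  induction a generalizing f with
  | zero => simp [conv_nil]
  | succ a ih =>
    rw [zs_succ, conv_cons, ih, Finset.Nat.sum_antidiagonal_succ]
    simp [List.replicate_succ]

theorem sum_ad_assoc (F : ℕ → ℕ → ℕ → ℂ) (n : ℕ) :
    ∑ p ∈ antidiagonal n, ∑ q ∈ antidiagonal p.1, F q.1 q.2 p.2 =
      ∑ p ∈ antidiagonal n, ∑ q ∈ antidiagonal p.2, F p.1 q.1 q.2 := by
  rw [Finset.sum_sigma', Finset.sum_sigma']
  refine Finset.sum_nbij' (fun x => ⟨(x.2.1, x.2.2 + x.1.2), (x.2.2, x.1.2)⟩)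
    (fun x => ⟨(x.1.1 + x.2.1, x.2.2), (x.1.1, x.2.1)⟩) ?_ ?_ ?_ ?_ ?_
  · rintro ⟨⟨a, b⟩, ⟨c, d⟩⟩ h
    simp at h ⊢; omega
  · rintro ⟨⟨a, b⟩, ⟨c, d⟩⟩ h
    simp at h ⊢; omega
  · rintro ⟨⟨a, b⟩, ⟨c, d⟩⟩ h
    simp at h ⊢; omega
  · rintro ⟨⟨a, b⟩, ⟨c, d⟩⟩ h
    simp at h ⊢; omega
  · rintro ⟨⟨a, b⟩, ⟨c, d⟩⟩ h
    simp

/-! ### The factorials -/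

theorem nFact_zs (a : ℕ) : nFact (zs a) = a.factorial := by
  unfold nFact
  rw [List.splitOn_eq_splitOnP, List.splitOnP_eq_singleton]
  · simp
  · intro x hx
    rw [List.eq_of_mem_replicate hx]; decide

theorem nFact_append (u v : Word) : nFact (u ++ Letter.w :: v) = nFact u * nFact v := by
  unfold nFact
  rw [List.splitOn_eq_splitOnP, List.splitOnP_append_cons _ _ (by simp)]
  simp [List.splitOn_eq_splitOnP]

theorem nFact_ne_zero (s : Word) : (nFact s : ℂ) ≠ 0 := by
  refine word_induct (P := fun s => (nFact s : ℂ) ≠ 0) ?_ ?_ s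
  · intro a; rw [nFact_zs]; exact_mod_cast a.factorial_ne_zero
  · intro a t ih; rw [nFact_append, nFact_zs]; push_cast
    exact mul_ne_zero (by exact_mod_cast a.factorial_ne_zero) ih

/-! ### The star operation -/

/-- Letterwise version of `φ_{⋆g}`; `n` is the length of the current run of `z`. -/
noncomputable def st (g : ℕ → ℂ) : Word → ℕ → (Word → ℂ) → ℂ
  | [], n, φ => φ (zs n)
  | Letter.z :: s, n, φ => st g s (n + 1) φ
  | Letter.w :: s, n, φ =>
      ∑ p ∈ antidiagonal n, g p.2 * st g s 0 (fun t => φ (zs p.1 ++ Letter.w :: t))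

theorem st_zs (g : ℕ → ℂ) (a n : ℕ) (φ : Word → ℂ) : st g (zs a) n φ = φ (zs (n + a)) := by
  induction a generalizing n with
  | zero => rfl
  | succ a ih => rw [zs_succ, st, ih]; congr 2; omega

theorem st_zs_append (g : ℕ → ℂ) (a n : ℕ) (s : Word) (φ : Word → ℂ) :
    st g (zs a ++ Letter.w :: s) n φ =
      ∑ p ∈ antidiagonal (n + a), g p.2 * st g s 0 (fun t => φ (zs p.1 ++ Letter.w :: t)) := by
  induction a generalizing n with
  | zero => rfl
  | succ a ih => rw [zs_succ, List.cons_append, st, ih]; congr 2; omega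

theorem st_add (g : ℕ → ℂ) (s : Word) (φ ψ : Word → ℂ) :
    st g s 0 (fun t => φ t + ψ t) = st g s 0 φ + st g s 0 ψ := by
  induction s using word_induct generalizing φ ψ with
  | h0 a => simp [st_zs]
  | h1 a t ih => simp [st_zs_append, ih, mul_add, Finset.sum_add_distrib]

theorem st_smul (g : ℕ → ℂ) (s : Word) (c : ℂ) (φ : Word → ℂ) :
    st g s 0 (fun t => c * φ t) = c * st g s 0 φ := by
  induction s using word_induct generalizing φ with
  | h0 a => simp [st_zs]
  | h1 a t ih => simp [st_zs_append, ih, mul_left_comm, Finset.mul_sum]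

theorem st_sum {ι : Type*} (g : ℕ → ℂ) (s : Word) (I : Finset ι) (φ : ι → Word → ℂ) :
    st g s 0 (fun t => ∑ i ∈ I, φ i t) = ∑ i ∈ I, st g s 0 (φ i) := by
  induction s using word_induct generalizing φ with
  | h0 a => simp [st_zs]
  | h1 a t ih =>
    simp_rw [st_zs_append, ih, Finset.mul_sum]
    rw [Finset.sum_comm]

theorem star_eq_st {f g : Word → ℂ} {G : Word → Word → ℂ} (hG : IsStarAux f g G)
    (hg : g [] = 1) (pre s : Word) :
    G pre s = st (fun n => g (zs n)) s 0 (fun t => f (pre ++ t)) := by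
  have key : ∀ (pre : Word) (a : ℕ) (s : Word), G pre (zs a ++ Letter.w :: s) =
      ∑ p ∈ antidiagonal a, g (zs p.2) * G (pre ++ zs p.1 ++ [Letter.w]) s := by
    intro pre a s
    have hdec : ∀ s : Word, ∃ k r, s = List.replicate k Letter.w ++ r ∧
        r.head? ≠ some Letter.w := by
      intro s
      induction s with
      | nil => exact ⟨0, [], rfl, by simp⟩
      | cons x s ih =>
        cases x with
        | z => exact ⟨0, Letter.z :: s, rfl, by simp⟩
        | w =>
          obtain ⟨k, r, rfl, h⟩ := ih
          exact ⟨k + 1, r, rfl, h⟩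
    obtain ⟨k, r, rfl, hr⟩ := hdec s
    have h1 := hG.2 pre a (k + 1) r (by omega) hr
    have h2 : ∀ pre' : Word, G pre' (List.replicate k Letter.w ++ r) =
        G (pre' ++ List.replicate k Letter.w) r := by
      intro pre'
      rcases Nat.eq_zero_or_pos k with rfl | hk
      · simp
      · have := hG.2 pre' 0 k r hk hr
        simpa [hg] using this
    rw [show zs a ++ Letter.w :: (List.replicate k Letter.w ++ r) =
      List.replicate a Letter.z ++ List.replicate (k + 1) Letter.w ++ r by
        simp [List.replicate_succ], h1]
    rw [Finset.Nat.sum_antidiagonal_eq_sum_range_succ_mk]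
    refine Finset.sum_congr rfl fun c _ => ?_
    simp only [h2]
    simp [List.replicate_succ]
  induction s using word_induct generalizing pre with
  | h0 a => rw [st_zs, hG.1 _ _ (w_notMem_zs a)]; simp
  | h1 a t ih =>
    rw [key, st_zs_append]
    simp [ih]

/-! ### The letterwise recursion for moments in terms of cumulants -/

/-- The sum over all blocks containing the first letter `w`; `u` is the subword of the block read so
far, `n` the number of letters `z` outside the block since the last `w`. -/
noncomputable def Kf (M L : Word → ℂ) : Word → Word → ℕ → ℂ
  | [], u, n => if Letter.w ∈ u then L u * M (zs n) else 0
  | Letter.z :: s, u, n => Kf M L s (u ++ [Letter.z]) n + Kf M L s u (n + 1)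
  | Letter.w :: s, u, n => M (zs n) * Kf M L s (u ++ [Letter.w]) 0 +
      if Letter.w ∈ u then L u * M (zs n ++ Letter.w :: s) else 0

theorem Kf_zs_append (M L : Word → ℂ) (a : ℕ) (s u : Word) (n : ℕ) :
    Kf M L (zs a ++ s) u n =
      ∑ p ∈ antidiagonal a, (a.choose p.1 : ℂ) * Kf M L s (u ++ zs p.1) (n + p.2) := by
  induction a generalizing u n with
  | zero => simp
  | succ a ih =>
    rw [Finset.sum_antidiagonal_choose_succ_mul (fun i j => Kf M L s (u ++ zs i) (n + j)),
      zs_succ, List.cons_append, Kf, ih, ih, add_comm]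
    congr 1
    · refine Finset.sum_congr rfl fun p _ => ?_
      rw [add_right_comm, add_assoc]
    · refine Finset.sum_congr rfl fun p hp => ?_
      rw [Nat.choose_symm_of_eq_add (HasAntidiagonal.mem_antidiagonal.1 hp).symm]
      simp [List.replicate_succ]

/-- Normalized version of `Kf`. -/
noncomputable def kap (M L : Word → ℂ) (u s : Word) : ℂ :=
  Kf M L s u 0 / (nFact u * nFact s)

theorem choose_div {a : ℕ} {p : ℕ × ℕ} (hp : p ∈ antidiagonal a) (X U : ℂ) :
    (a.choose p.1 : ℂ) * X / (U * (a.factorial : ℂ)) =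
      X / (U * ((p.1.factorial : ℂ) * (p.2.factorial : ℂ))) := by
  obtain rfl := HasAntidiagonal.mem_antidiagonal.1 hp
  rw [Nat.cast_add_choose]
  have := (p.1 + p.2).factorial_ne_zero
  have := (p.1).factorial_ne_zero
  have := (p.2).factorial_ne_zero
  field_simp

section
variable {M L ℓ : Word → ℂ} {g : ℕ → ℂ}

theorem kap_zs (hℓ : ∀ s, s ≠ [] → ℓ s = L s / nFact s) (u : Word)
    (hu : ∀ c, nFact (u ++ zs c) = nFact u * c.factorial) (a : ℕ) :
    kap M L u (zs a) =
      ∑ p ∈ antidiagonal a, deltaF ℓ (u ++ zs p.1) * genFun M (zs p.2) := by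
  have := Kf_zs_append M L a [] u 0
  rw [List.append_nil] at this
  rw [kap, this, Finset.sum_div]
  refine Finset.sum_congr rfl fun p hp => ?_
  rw [Kf, nFact_zs, choose_div hp]
  by_cases hw : Letter.w ∈ u
  · have hne : u ++ zs p.1 ≠ [] := by
      intro h; rw [List.append_eq_nil_iff] at h; simp [h.1] at hw
    simp only [hw, deltaF, List.mem_append, true_or, if_true, hℓ _ hne, hu, genFun, nFact_zs,
      zero_add, div_mul_div_comm]
    push_cast
    ring_nf
  · simp [hw, deltaF]

theorem kap_zs_append (hℓ : ∀ s, s ≠ [] → ℓ s = L s / nFact s) (u : Word)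
    (hu : ∀ c, nFact (u ++ zs c) = nFact u * c.factorial) (a : ℕ) (s : Word) :
    kap M L u (zs a ++ Letter.w :: s) =
      ∑ p ∈ antidiagonal a, (genFun M (zs p.2) * kap M L (u ++ zs p.1 ++ [Letter.w]) s +
        deltaF ℓ (u ++ zs p.1) * genFun M (zs p.2 ++ Letter.w :: s)) := by
  rw [kap, Kf_zs_append, Finset.sum_div]
  refine Finset.sum_congr rfl fun p hp => ?_
  rw [Kf, nFact_append, nFact_zs]
  push_cast
  rw [mul_left_comm, ← mul_assoc, mul_comm (a.factorial : ℂ), mul_right_comm, choose_div hp,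
    add_div]
  rw [zero_add]
  congr 1
  · have : nFact (u ++ zs p.1 ++ [Letter.w]) = nFact u * p.1.factorial := by
      rw [nFact_append, hu]; simp [nFact]
    simp only [kap, genFun, this, nFact_zs, div_mul_div_comm]
    push_cast
    ring_nf
  · by_cases hw : Letter.w ∈ u
    · have hne : u ++ zs p.1 ≠ [] := by
        intro h; rw [List.append_eq_nil_iff] at h; simp [h.1] at hw
      simp only [hw, deltaF, List.mem_append, true_or, if_true, hℓ _ hne, hu, genFun, nFact_zs,
        nFact_append, div_mul_div_comm]
      push_cast
      ring_nf
    · simp [hw, deltaF]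

theorem st_kap (hℓ : ∀ s, s ≠ [] → ℓ s = L s / nFact s)
    (hg : ∀ n, ∑ p ∈ antidiagonal n, genFun M (zs p.1) * g p.2 = if n = 0 then 1 else 0)
    (s u : Word) (hu : ∀ c, nFact (u ++ zs c) = nFact u * c.factorial) :
    st g s 0 (kap M L u) =
      conv (fun x => deltaF ℓ (u ++ x)) (fun y => st g y 0 (genFun M)) s := by
  induction s using word_induct generalizing u with
  | h0 a => rw [st_zs, zero_add, kap_zs hℓ u hu, conv_zs]; simp [st_zs]
  | h1 a t ih =>
    rw [st_zs_append, conv_zs_append, zero_add]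
    simp_rw [kap_zs_append hℓ u hu, st_sum, st_add, st_smul, Finset.sum_add_distrib, mul_add,
      Finset.sum_add_distrib, Finset.mul_sum]
    rw [add_comm]
    congr 1
    · rw [sum_ad_assoc (fun i j k => g k * (deltaF ℓ (u ++ zs i) *
        st g t 0 (fun t => genFun M (zs j ++ Letter.w :: t))))]
      refine Finset.sum_congr rfl fun p _ => ?_
      rw [st_zs_append, zero_add, Finset.mul_sum]
      refine Finset.sum_congr rfl fun q _ => ?_
      ring
    · rw [sum_ad_assoc (fun i j k => g k * (genFun M (zs j) *
        st g t 0 (kap M L (u ++ zs i ++ [Letter.w]))))]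
      have : ∀ p ∈ antidiagonal a, ∑ q ∈ antidiagonal p.2, g q.2 * (genFun M (zs q.1) *
          st g t 0 (kap M L (u ++ zs p.1 ++ [Letter.w]))) =
          if p = (a, 0) then st g t 0 (kap M L (u ++ zs a ++ [Letter.w])) else 0 := by
        rintro ⟨i, j⟩ hp
        have := hg j
        have h2 : ∑ q ∈ antidiagonal j, g q.2 * (genFun M (zs q.1) *
          st g t 0 (kap M L (u ++ zs i ++ [Letter.w]))) = (if j = 0 then 1 else 0) *
            st g t 0 (kap M L (u ++ zs i ++ [Letter.w])) := by
          rw [← this, Finset.sum_mul]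
          exact Finset.sum_congr rfl fun q _ => by ring
        dsimp only
        rw [h2]
        rw [HasAntidiagonal.mem_antidiagonal] at hp
        dsimp at hp
        by_cases hj : j = 0
        · subst hj; obtain rfl : i = a := by omega
          simp
        · simp [hj]
      rw [Finset.sum_congr rfl this, Finset.sum_ite_eq' , if_pos (by simp), ih]
      · simp
      · intro c
        rw [show u ++ zs a ++ [Letter.w] ++ zs c = (u ++ zs a) ++ Letter.w :: zs c by simp,
          nFact_append, nFact_append, nFact_zs]
        simp [nFact]

theorem st_congr_w {φ ψ : Word → ℂ} (h : ∀ s, Letter.w ∈ s → φ s = ψ s) (s : Word)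
    (hs : Letter.w ∈ s) : st g s 0 φ = st g s 0 ψ := by
  rcases word_cases s with ⟨a, rfl⟩ | ⟨a, t, rfl⟩
  · exact absurd hs (w_notMem_zs a)
  · rw [st_zs_append, st_zs_append]
    refine Finset.sum_congr rfl fun p _ => ?_
    congr 2
    funext t
    exact h _ (by simp)

/-- `M⋆ = M{z,0} + δL ⋆ M⋆`, given the recursion for the moments. -/
theorem st_eq_conv (hℓ : ∀ s, s ≠ [] → ℓ s = L s / nFact s)
    (hg : ∀ n, ∑ p ∈ antidiagonal n, genFun M (zs p.1) * g p.2 = if n = 0 then 1 else 0)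
    (hrec : ∀ s, Letter.w ∈ s → M s = Kf M L s [] 0) (s : Word) :
    st g s 0 (genFun M) - restrZ (genFun M) s =
      conv (deltaF ℓ) (fun y => st g y 0 (genFun M)) s := by
  have hu : ∀ c, nFact ([] ++ zs c) = nFact [] * c.factorial := by
    intro c; rw [List.nil_append, nFact_zs]; simp [nFact]
  have key := st_kap (g := g) hℓ hg s [] hu
  simp only [List.nil_append] at key
  change _ = conv (fun x => deltaF ℓ x) _ s
  by_cases hs : Letter.w ∈ s
  · rw [← key, restrZ, if_pos hs, sub_zero]
    refine st_congr_w (fun t ht => ?_) s hs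
    rw [genFun, hrec t ht, kap]; simp [nFact]
  · rw [restrZ, if_neg hs, zs_of_notMem hs, st_zs, zero_add, sub_self, conv_zs]
    symm
    refine Finset.sum_eq_zero fun p _ => ?_
    simp [deltaF]
end

end

section
open Finset
open scoped ENNReal

/-! ### Norm estimates -/

/-- Splitting a word at a position. -/
def splitEquiv : (Σ s : Word, Fin (s.length + 1)) ≃ Word × Word where
  toFun x := (x.1.take x.2, x.1.drop x.2)
  invFun p := ⟨p.1 ++ p.2, ⟨p.1.length, by simp⟩⟩
  left_inv := by
    rintro ⟨s, i⟩
    have h : s.take i ++ s.drop i = s := List.take_append_drop _ _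
    have hi : (s.take i).length = i := by simp; omega
    refine Sigma.ext h ?_
    refine (Fin.heq_ext_iff (congrArg (fun t : Word => t.length + 1) h)).2 ?_
    exact hi
  right_inv := by
    rintro ⟨u, v⟩
    simp

theorem tsum_split (F : Word → Word → ℝ≥0∞) :
    ∑' s : Word, ∑ i ∈ range (s.length + 1), F (s.take i) (s.drop i) =
      (∑' u : Word, ∑' v : Word, F u v) := by
  rw [← ENNReal.tsum_prod, ← splitEquiv.tsum_eq, ENNReal.tsum_sigma']
  refine tsum_congr fun s => ?_
  rw [tsum_fintype, Finset.sum_range]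
  rfl

theorem ofReal_conv_le {V : Word → ℝ} (hpos : ∀ s, 0 < V s)
    (hsub : ∀ s t : Word, V (s ++ t) ≤ V s * V t) (f g : Word → ℂ) (s : Word) :
    ENNReal.ofReal (V s * ‖conv f g s‖) ≤ ∑ i ∈ range (s.length + 1),
      ENNReal.ofReal (V (s.take i) * ‖f (s.take i)‖) *
        ENNReal.ofReal (V (s.drop i) * ‖g (s.drop i)‖) := by
  have h0 : ∀ (f : Word → ℂ) s, 0 ≤ V s * ‖f s‖ := fun f s =>
    mul_nonneg (hpos s).le (norm_nonneg _)
  simp_rw [← ENNReal.ofReal_mul (h0 f _)]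
  rw [← ENNReal.ofReal_sum_of_nonneg fun i _ => mul_nonneg (h0 f _) (h0 g _)]
  refine ENNReal.ofReal_le_ofReal ?_
  calc V s * ‖conv f g s‖ ≤ V s * ∑ i ∈ range (s.length + 1), ‖f (s.take i)‖ * ‖g (s.drop i)‖ := by
        refine mul_le_mul_of_nonneg_left ?_ (hpos s).le
        refine (norm_sum_le _ _).trans (Finset.sum_le_sum fun i _ => ?_)
        rw [norm_mul]
    _ ≤ _ := by
        rw [Finset.mul_sum]
        refine Finset.sum_le_sum fun i _ => ?_
        have := hsub (s.take i) (s.drop i)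
        rw [List.take_append_drop] at this
        calc V s * (‖f (s.take i)‖ * ‖g (s.drop i)‖) ≤
            (V (s.take i) * V (s.drop i)) * (‖f (s.take i)‖ * ‖g (s.drop i)‖) :=
              mul_le_mul_of_nonneg_right this (by positivity)
          _ = _ := by ring

theorem normW_conv_le {V : Word → ℝ} (hpos : ∀ s, 0 < V s)
    (hsub : ∀ s t : Word, V (s ++ t) ≤ V s * V t) (f g : Word → ℂ) :
    normW V (conv f g) ≤ normW V f * normW V g := by
  calc normW V (conv f g) ≤ _ := ENNReal.tsum_le_tsum fun s => ofReal_conv_le hpos hsub f g s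
    _ = _ := tsum_split (fun u v => ENNReal.ofReal (V u * ‖f u‖) * ENNReal.ofReal (V v * ‖g v‖))
    _ = _ := by
      simp_rw [ENNReal.tsum_mul_left, ENNReal.tsum_mul_right]
      rfl

theorem normW_mono {V : Word → ℝ} (hpos : ∀ s, 0 < V s) {f g : Word → ℂ}
    (h : ∀ s, ‖f s‖ ≤ ‖g s‖) : normW V f ≤ normW V g :=
  ENNReal.tsum_le_tsum fun s =>
    ENNReal.ofReal_le_ofReal (mul_le_mul_of_nonneg_left (h s) (hpos s).le)

theorem normW_add_le {V : Word → ℝ} (hpos : ∀ s, 0 < V s) (f g : Word → ℂ) :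
    normW V (fun s => f s + g s) ≤ normW V f + normW V g := by
  unfold normW
  rw [← ENNReal.tsum_add]
  refine ENNReal.tsum_le_tsum fun s => ?_
  rw [← ENNReal.ofReal_add (mul_nonneg (hpos s).le (norm_nonneg _))
    (mul_nonneg (hpos s).le (norm_nonneg _)), ← mul_add]
  exact ENNReal.ofReal_le_ofReal (mul_le_mul_of_nonneg_left (norm_add_le _ _) (hpos s).le)

instance letterFinite : Finite Letter :=
  Finite.of_injective (fun x : Letter => decide (x = Letter.z)) (by
    intro x y h; cases x <;> cases y <;> simp_all)

theorem normW_inv_le {V : Word → ℝ} (hpos : ∀ s, 0 < V s)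
    (hsub : ∀ s t : Word, V (s ++ t) ≤ V s * V t) (hV1 : V [] = 1) {Q : ℝ} (hQ : 1 < Q)
    {f g : Word → ℂ} (hf : f [] = 1) (hfg : ∀ s, conv f g s = if s = [] then 1 else 0)
    (hn : normW V f < ENNReal.ofReal (2 - 1 / Q)) : normW V g ≤ ENNReal.ofReal Q := by
  classical
  set h : Word → ℂ := fun s => if s = [] then 0 else f s with hh
  have hQ0 : 0 < Q := by linarith
  have hQ1 : 1 / Q < 1 := by rw [div_lt_one hQ0]; exact hQ
  have hfh : normW V f = 1 + normW V h := by
    unfold normW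
    rw [ENNReal.summable.tsum_eq_add_tsum_ite' (b := ([] : Word)) , hf, hV1]
    congr 1
    · simp
    · refine tsum_congr fun s => ?_
      by_cases hs : s = [] <;> simp [hh, hs]
  have hr : normW V h ≤ ENNReal.ofReal (1 - 1 / Q) := by
    rw [hfh, show 2 - 1 / Q = 1 + (1 - 1 / Q) by ring,
      ENNReal.ofReal_add zero_le_one (by linarith), ENNReal.ofReal_one] at hn
    exact ((ENNReal.add_lt_add_iff_left ENNReal.one_ne_top).1 hn).le
  have hg : ∀ s, g s = (if s = [] then 1 else 0) - conv h g s := by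
    intro s
    rw [← hfg s]
    have : conv f g s = conv (fun t => (if t = [] then 1 else 0) + h t) g s :=
      conv_congr (fun t => by by_cases ht : t = [] <;> simp [hh, ht, hf]) (fun _ => rfl) s
    have h1 : conv (fun t => if t = [] then (1 : ℂ) else 0) g s = g s := by
      cases s with
      | nil => simp [conv_nil]
      | cons x s => rw [conv_cons]; simp [conv]
    rw [this, conv_add_left, h1]; ring
  have key : ∀ N : ℕ, normW V (fun s => if s.length ≤ N then g s else 0) ≤ ENNReal.ofReal Q := by
    intro N
    set gN : Word → ℂ := fun s => if s.length ≤ N then g s else 0 with hgN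
    have hfin : normW V gN ≠ ⊤ := by
      unfold normW
      rw [tsum_eq_sum (s := (List.finite_length_le Letter N).toFinset)]
      · exact (ENNReal.sum_lt_top.2 fun _ _ => ENNReal.ofReal_lt_top).ne
      · intro s hs
        have : ¬ s.length ≤ N := by simpa using hs
        simp [hgN, this]
    have hle : normW V gN ≤ 1 + ENNReal.ofReal (1 - 1 / Q) * normW V gN := by
      calc normW V gN ≤ normW V (fun s => (if s = [] then 1 else 0) + -conv h gN s) := by
            refine normW_mono hpos fun s => ?_
            by_cases hs : s.length ≤ N
            · have : conv h g s = conv h gN s := by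
                unfold conv
                refine Finset.sum_congr rfl fun i _ => ?_
                have : (s.drop i).length ≤ N := by simp; omega
                simp only [hgN, if_pos this]
              simp only [hgN, if_pos hs]
              rw [hg s, this, sub_eq_add_neg]
            · simp [hgN, hs]
        _ ≤ normW V (fun s => if s = [] then 1 else 0) + normW V (fun s => -conv h gN s) :=
            normW_add_le hpos _ _
        _ = 1 + normW V (conv h gN) := by
            congr 1
            · unfold normW
              rw [tsum_eq_single []]
              · simp [hV1]
              · intro s hs; simp [hs]
            · simp [normW]
        _ ≤ 1 + normW V h * normW V gN := by gcongr; exact normW_conv_le hpos hsub h gN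
        _ ≤ _ := by gcongr
    lift normW V gN to NNReal using hfin with X hX
    have hX0 : 0 ≤ (1 - 1 / Q) * (X : ℝ) := mul_nonneg (by linarith) X.2
    rw [← ENNReal.ofReal_coe_nnreal, ← ENNReal.ofReal_mul (by linarith), ← ENNReal.ofReal_one,
      ← ENNReal.ofReal_add zero_le_one hX0,
      ENNReal.ofReal_le_ofReal_iff (add_nonneg zero_le_one hX0)] at hle
    rw [← ENNReal.ofReal_coe_nnreal]
    refine ENNReal.ofReal_le_ofReal ?_
    have : (X : ℝ) * (1 / Q) ≤ 1 := by linarith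
    rw [mul_one_div, div_le_one hQ0] at this
    exact this
  unfold normW
  rw [ENNReal.tsum_eq_iSup_sum]
  refine iSup_le fun F => ?_
  obtain ⟨N, hN⟩ : ∃ N : ℕ, ∀ s ∈ F, s.length ≤ N :=
    ⟨F.sup List.length, fun s hs => Finset.le_sup (f := List.length) hs⟩
  calc _ = ∑ s ∈ F, ENNReal.ofReal (V s * ‖(if s.length ≤ N then g s else 0)‖) :=
        Finset.sum_congr rfl fun s hs => by rw [if_pos (hN s hs)]
    _ ≤ _ := ENNReal.sum_le_tsum F
    _ ≤ _ := key N

/-! ### Norm of the star operation -/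

theorem tsum_antidiag (F : ℕ × ℕ → ℝ≥0∞) :
    ∑' a : ℕ, ∑ p ∈ antidiagonal a, F p = ∑' p, F p := by
  rw [← (Finset.HasAntidiagonal.sigmaAntidiagonalEquivProd (A := ℕ)).tsum_eq, ENNReal.tsum_sigma']
  refine tsum_congr fun a => ?_
  rw [tsum_fintype]
  exact (Finset.sum_coe_sort (antidiagonal a) F).symm

theorem zsw_injective :
    Function.Injective (fun x : ℕ × Word => zs x.1 ++ Letter.w :: x.2) := by
  rintro ⟨a, s⟩ ⟨b, t⟩ h
  dsimp only at h
  induction a generalizing b with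
  | zero =>
    cases b with
    | zero => simpa using h
    | succ b => simp [zs_succ] at h
  | succ a ih =>
    cases b with
    | zero => simp [zs_succ] at h
    | succ b =>
      have := ih b (by simpa [zs_succ] using h)
      simpa using this

theorem tsum_count_succ (F : Word → ℝ≥0∞) (m : ℕ) :
    ∑' s : Word, (if s.count Letter.w = m + 1 then F s else 0) =
      ∑' a : ℕ, ∑' t : Word, if t.count Letter.w = m then F (zs a ++ Letter.w :: t) else 0 := by
  rw [← ENNReal.tsum_prod, ← zsw_injective.tsum_eq]
  · refine tsum_congr fun x => ?_
    have : (zs x.1).count Letter.w = 0 := List.count_eq_zero.2 (w_notMem_zs _)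
    simp [List.count_append, this]
  · intro s hs
    rcases word_cases s with ⟨a, rfl⟩ | ⟨a, t, rfl⟩
    · have : (zs a).count Letter.w = 0 := List.count_eq_zero.2 (w_notMem_zs _)
      simp [this] at hs
    · exact ⟨(a, t), rfl⟩

theorem star_norm_aux {W : Word → ℝ} (hWpos : ∀ s, 0 < W s)
    (hWsub : ∀ s t : Word, W (s ++ t) ≤ W s * W t)
    (hWcomm : ∀ s t : Word, W (s ++ t) = W (t ++ s)) {Q : ℝ} (hQ : 0 < Q) {g : ℕ → ℂ}
    (hg : ∑' d : ℕ, ENNReal.ofReal (W (zs d) * ‖g d‖) ≤ ENNReal.ofReal Q) (f : Word → ℂ)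
    (m : ℕ) (pre : Word) :
    ∑' s : Word, (if s.count Letter.w = m then ENNReal.ofReal (W (pre ++ s) *
        (Q ^ s.count Letter.w)⁻¹ * ‖st g s 0 (fun t => f (pre ++ t))‖) else 0) ≤
      ∑' s : Word, (if s.count Letter.w = m then
        ENNReal.ofReal (W (pre ++ s) * ‖f (pre ++ s)‖) else 0) := by
  induction m generalizing pre with
  | zero =>
    refine ENNReal.tsum_le_tsum fun s => ?_
    split_ifs with h
    · rw [h, zs_of_notMem (List.count_eq_zero.1 h), st_zs]
      simp
    · exact le_rfl
  | succ m ih =>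
    rw [tsum_count_succ, tsum_count_succ]
    have hpt : ∀ (a : ℕ) (t : Word), t.count Letter.w = m →
        ENNReal.ofReal (W (pre ++ (zs a ++ Letter.w :: t)) *
          (Q ^ (zs a ++ Letter.w :: t).count Letter.w)⁻¹ *
          ‖st g (zs a ++ Letter.w :: t) 0 (fun t => f (pre ++ t))‖) ≤
        ∑ p ∈ antidiagonal a, ENNReal.ofReal Q⁻¹ * ENNReal.ofReal (W (zs p.2) * ‖g p.2‖) *
          ENNReal.ofReal (W (pre ++ zs p.1 ++ [Letter.w] ++ t) * (Q ^ t.count Letter.w)⁻¹ *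
            ‖st g t 0 (fun t => f (pre ++ zs p.1 ++ [Letter.w] ++ t))‖) := by
      intro a t ht
      have hc : (zs a ++ Letter.w :: t).count Letter.w = t.count Letter.w + 1 := by
        have : (zs a).count Letter.w = 0 := List.count_eq_zero.2 (w_notMem_zs _)
        simp [List.count_append, this]
      have hW0 : ∀ s, 0 ≤ W s := fun s => (hWpos s).le
      have hq : ∀ k : ℕ, 0 ≤ (Q ^ k)⁻¹ := fun k => by positivity
      have hQi : 0 ≤ Q⁻¹ := by positivity
      simp_rw [← ENNReal.ofReal_mul hQi]
      simp_rw [fun p : ℕ × ℕ => (ENNReal.ofReal_mul (q := W (pre ++ zs p.1 ++ [Letter.w] ++ t) * (Q ^ t.count Letter.w)⁻¹ *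
            ‖st g t 0 (fun t => f (pre ++ zs p.1 ++ [Letter.w] ++ t))‖) (mul_nonneg hQi
        (mul_nonneg (hW0 (zs p.2)) (norm_nonneg (g p.2))))).symm]
      rw [← ENNReal.ofReal_sum_of_nonneg fun p _ => mul_nonneg (mul_nonneg hQi
        (mul_nonneg (hW0 (zs p.2)) (norm_nonneg (g p.2)))) (mul_nonneg (mul_nonneg (hW0 _) (hq _))
          (norm_nonneg _))]
      refine ENNReal.ofReal_le_ofReal ?_
      rw [hc, st_zs_append, zero_add]
      refine (mul_le_mul_of_nonneg_left (norm_sum_le _ _)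
        (mul_nonneg (hW0 _) (hq _))).trans ?_
      rw [Finset.mul_sum]
      refine Finset.sum_le_sum fun p hp => ?_
      rw [norm_mul]
      have hWW : W (pre ++ (zs a ++ Letter.w :: t)) ≤
          W (zs p.2) * W (pre ++ zs p.1 ++ [Letter.w] ++ t) := by
        obtain rfl := HasAntidiagonal.mem_antidiagonal.1 hp
        calc W (pre ++ (zs (p.1 + p.2) ++ Letter.w :: t))
            = W ((pre ++ zs p.1) ++ (zs p.2 ++ Letter.w :: t)) := by
              rw [zs_add]; simp only [List.append_assoc]
          _ = W (zs p.2 ++ (Letter.w :: t ++ (pre ++ zs p.1))) := by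
              rw [hWcomm]; simp only [List.append_assoc]
          _ ≤ W (zs p.2) * W (Letter.w :: t ++ (pre ++ zs p.1)) := hWsub _ _
          _ = _ := by rw [hWcomm (Letter.w :: t)]; simp only [List.append_assoc]; rfl
      have harg : (fun t => f (pre ++ (zs p.1 ++ Letter.w :: t))) =
          (fun t => f (pre ++ zs p.1 ++ [Letter.w] ++ t)) := by
        funext t; simp
      rw [harg]
      set Y := ‖st g t 0 (fun t => f (pre ++ zs p.1 ++ [Letter.w] ++ t))‖ with hY
      have hY0 : 0 ≤ Y := norm_nonneg _
      calc _ ≤ (W (zs p.2) * W (pre ++ zs p.1 ++ [Letter.w] ++ t)) *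
            (Q ^ (t.count Letter.w + 1))⁻¹ * (‖g p.2‖ * Y) := by
              refine mul_le_mul_of_nonneg_right (mul_le_mul_of_nonneg_right hWW (hq _)) ?_
              positivity
        _ = _ := by rw [pow_succ, mul_inv]; ring
    calc _ ≤ ∑' a : ℕ, ∑' t : Word, ∑ p ∈ antidiagonal a,
            ENNReal.ofReal Q⁻¹ * ENNReal.ofReal (W (zs p.2) * ‖g p.2‖) *
            (if t.count Letter.w = m then
          ENNReal.ofReal (W (pre ++ zs p.1 ++ [Letter.w] ++ t) * (Q ^ t.count Letter.w)⁻¹ *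
            ‖st g t 0 (fun t => f (pre ++ zs p.1 ++ [Letter.w] ++ t))‖) else 0) := by
          refine ENNReal.tsum_le_tsum fun a => ENNReal.tsum_le_tsum fun t => ?_
          split_ifs with h
          · exact hpt a t h
          · exact zero_le
      _ = ∑' t : Word, ∑' p : ℕ × ℕ,
            ENNReal.ofReal Q⁻¹ * ENNReal.ofReal (W (zs p.2) * ‖g p.2‖) *
            (if t.count Letter.w = m then
          ENNReal.ofReal (W (pre ++ zs p.1 ++ [Letter.w] ++ t) * (Q ^ t.count Letter.w)⁻¹ *
            ‖st g t 0 (fun t => f (pre ++ zs p.1 ++ [Letter.w] ++ t))‖) else 0) := by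
          rw [ENNReal.tsum_comm]
          exact tsum_congr fun t => tsum_antidiag _
      _ = ∑' c : ℕ, ∑' d : ℕ, ENNReal.ofReal Q⁻¹ * ENNReal.ofReal (W (zs d) * ‖g d‖) *
            ∑' t : Word, (if t.count Letter.w = m then
          ENNReal.ofReal (W (pre ++ zs c ++ [Letter.w] ++ t) * (Q ^ t.count Letter.w)⁻¹ *
            ‖st g t 0 (fun t => f (pre ++ zs c ++ [Letter.w] ++ t))‖) else 0) := by
          rw [ENNReal.tsum_comm, ENNReal.tsum_prod']
          exact tsum_congr fun c => tsum_congr fun d => ENNReal.tsum_mul_left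
      _ ≤ ∑' c : ℕ, ∑' t : Word, (if t.count Letter.w = m then
            ENNReal.ofReal (W (pre ++ zs c ++ [Letter.w] ++ t) *
              ‖f (pre ++ zs c ++ [Letter.w] ++ t)‖) else 0) := by
          refine ENNReal.tsum_le_tsum fun c => ?_
          rw [ENNReal.tsum_mul_right, ENNReal.tsum_mul_left]
          have hle : ENNReal.ofReal Q⁻¹ * ∑' d : ℕ, ENNReal.ofReal (W (zs d) * ‖g d‖) ≤ 1 := by
            calc _ ≤ ENNReal.ofReal Q⁻¹ * ENNReal.ofReal Q := by gcongr
              _ = 1 := by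
                rw [← ENNReal.ofReal_mul (by positivity), inv_mul_cancel₀ hQ.ne',
                  ENNReal.ofReal_one]
          refine (mul_le_mul_left hle _).trans ?_
          rw [one_mul]
          exact ih (pre ++ zs c ++ [Letter.w])
      _ = _ := by
          refine tsum_congr fun a => tsum_congr fun t => ?_
          simp

theorem tsum_count (F : Word → ℝ≥0∞) :
    ∑' s, F s = ∑' m : ℕ, ∑' s : Word, if s.count Letter.w = m then F s else 0 := by
  rw [ENNReal.tsum_comm]
  refine tsum_congr fun s => ?_
  rw [tsum_eq_single (s.count Letter.w)]
  · simp
  · intro m hm; rw [if_neg hm.symm]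

theorem star_norm {W : Word → ℝ} (hWpos : ∀ s, 0 < W s)
    (hWsub : ∀ s t : Word, W (s ++ t) ≤ W s * W t)
    (hWcomm : ∀ s t : Word, W (s ++ t) = W (t ++ s)) {Q : ℝ} (hQ : 0 < Q) {g : ℕ → ℂ}
    (hg : ∑' d : ℕ, ENNReal.ofReal (W (zs d) * ‖g d‖) ≤ ENNReal.ofReal Q) (f : Word → ℂ) :
    normW (fun s => W s * (Q ^ s.count Letter.w)⁻¹) (fun s => st g s 0 f) ≤ normW W f := by
  unfold normW
  rw [tsum_count, tsum_count (fun s => ENNReal.ofReal (W s * ‖f s‖))]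
  refine ENNReal.tsum_le_tsum fun m => ?_
  have := star_norm_aux hWpos hWsub hWcomm hQ hg f m []
  simpa using this
end

section
open Finset
open scoped Classical

/-! ### Admissible partitions -/

theorem mem_APfin {s : Word} {g : Finset ℕ} {P : Finset (Finset ℕ)} :
    P ∈ APfin s g ↔ IsPartitionOn g P ∧ Admissible s P := by
  unfold APfin
  rw [Finset.mem_filter, and_iff_right_iff_imp]
  rintro ⟨h, -⟩
  rw [Finset.mem_powerset]
  intro b hb
  rw [Finset.mem_powerset, ← h.2.2]
  exact Finset.le_sup (f := id) hb

theorem part_iff {g : Finset ℕ} {P : Finset (Finset ℕ)} :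
    IsPartitionOn g P ↔ (∀ b ∈ P, b.Nonempty) ∧
      (∀ b ∈ P, ∀ b' ∈ P, ∀ i, i ∈ b → i ∈ b' → b = b') ∧
      (∀ i, i ∈ g ↔ ∃ b ∈ P, i ∈ b) := by
  unfold IsPartitionOn
  refine and_congr_right fun _ => and_congr ?_ ?_
  · constructor
    · intro h b hb b' hb' i hi hi'
      by_contra hne
      exact Finset.disjoint_left.1 (h hb hb' hne) hi hi'
    · intro h b hb b' hb' hne
      refine Finset.disjoint_left.2 fun i hi hi' => hne (h b hb b' hb' i hi hi')
  · constructor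
    · rintro rfl i
      simp [Finset.mem_sup]
    · intro h
      ext i
      simp [Finset.mem_sup, h]

theorem block_subset {g : Finset ℕ} {P : Finset (Finset ℕ)} (h : IsPartitionOn g P) {b : Finset ℕ}
    (hb : b ∈ P) : b ⊆ g := fun i hi => ((part_iff.1 h).2.2 i).2 ⟨b, hb, hi⟩

/-- No block straddles a point of `K`. -/
def NoStraddle (K : Finset ℕ) (P : Finset (Finset ℕ)) : Prop :=
  ∀ b ∈ P, ∀ k ∈ K, ∀ i ∈ b, ∀ j ∈ b, i < k → ¬ k < j

/-- The sum over admissible partitions of `g` not straddling points of `K`. -/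
noncomputable def Tsum (L : Word → ℂ) (s : Word) (K g : Finset ℕ) : ℂ :=
  ∑ P ∈ (APfin s g).filter (NoStraddle K), ∏ b ∈ P, L (wordOf s b)

theorem Tsum_empty (L : Word → ℂ) (s : Word) (g : Finset ℕ) :
    Tsum L s ∅ g = ∑ P ∈ APfin s g, ∏ b ∈ P, L (wordOf s b) := by
  unfold Tsum
  rw [Finset.filter_true_of_mem]
  intro P _ b _ k hk
  simp at hk

/-! ### Transport along order isomorphisms -/

theorem sort_image {b : Finset ℕ} {e : ℕ → ℕ} (he : StrictMonoOn e b) :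
    (b.image e).sort (· ≤ ·) = (b.sort (· ≤ ·)).map e := by
  have h1 : b.image e = ((b.sort (· ≤ ·)).map e).toFinset := by
    ext x; simp
  have hs : ((b.sort (· ≤ ·)).map e).Pairwise (· ≤ ·) := by
    rw [List.pairwise_map]
    refine (Finset.pairwise_sort b (· ≤ ·)).imp_of_mem ?_
    intro x y hx hy hxy
    exact (he.le_iff_le (by simpa using hx) (by simpa using hy)).2 hxy
  have hnd : ((b.sort (· ≤ ·)).map e).Nodup := by
    refine List.Nodup.map_on ?_ (Finset.sort_nodup b (· ≤ ·))
    intro x hx y hy hxy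
    exact he.injOn (by simpa using hx) (by simpa using hy) hxy
  rw [h1]
  exact (List.toFinset_sort (· ≤ ·) hnd).2 hs

theorem wordOf_image {s t : Word} {b : Finset ℕ} {e : ℕ → ℕ} (he : StrictMonoOn e b)
    (hl : ∀ i ∈ b, letterAt s (e i) = letterAt t i) : wordOf s (b.image e) = wordOf t b := by
  unfold wordOf
  rw [sort_image he, List.map_map]
  refine List.map_congr_left fun i hi => ?_
  exact hl i (by simpa using hi)

theorem AP_image {s t : Word} {A : Finset ℕ} {e : ℕ → ℕ} (he : StrictMonoOn e A)
    (hl : ∀ i ∈ A, letterAt s (e i) = letterAt t i) {P : Finset (Finset ℕ)} (hP : P ∈ APfin t A) :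
    P.image (fun b => b.image e) ∈ APfin s (A.image e) := by
  rw [mem_APfin] at hP ⊢
  obtain ⟨hp, ha⟩ := hP
  have hsub : ∀ b ∈ P, ∀ i ∈ b, i ∈ A := fun b hb i hi => block_subset hp hb hi
  rw [part_iff] at hp ⊢
  refine ⟨⟨?_, ?_, ?_⟩, ?_⟩
  · intro c hc
    obtain ⟨b, hb, rfl⟩ := Finset.mem_image.1 hc
    exact (hp.1 b hb).image e
  · intro c hc c' hc' x hx hx'
    obtain ⟨b, hb, rfl⟩ := Finset.mem_image.1 hc
    obtain ⟨b', hb', rfl⟩ := Finset.mem_image.1 hc'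
    obtain ⟨i, hi, rfl⟩ := Finset.mem_image.1 hx
    obtain ⟨i', hi', h⟩ := Finset.mem_image.1 hx'
    have : i' = i := he.injOn (hsub b' hb' i' hi') (hsub b hb i hi) h
    subst this
    rw [hp.2.1 b hb b' hb' i' hi hi']
  · intro x
    constructor
    · intro hx
      obtain ⟨i, hi, rfl⟩ := Finset.mem_image.1 hx
      obtain ⟨b, hb, hib⟩ := (hp.2.2 i).1 hi
      exact ⟨b.image e, Finset.mem_image_of_mem _ hb, Finset.mem_image_of_mem _ hib⟩
    · rintro ⟨c, hc, hx⟩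
      obtain ⟨b, hb, rfl⟩ := Finset.mem_image.1 hc
      obtain ⟨i, hi, rfl⟩ := Finset.mem_image.1 hx
      exact Finset.mem_image_of_mem _ (hsub b hb i hi)
  · intro c hc c' hc' hne x hx hw hin
    obtain ⟨b, hb, rfl⟩ := Finset.mem_image.1 hc
    obtain ⟨b', hb', rfl⟩ := Finset.mem_image.1 hc'
    obtain ⟨i, hi, rfl⟩ := Finset.mem_image.1 hx
    rw [hl i (hsub b hb i hi)] at hw
    refine ha b hb b' hb' (fun h => hne (by rw [h])) i hi hw ?_
    obtain ⟨h1, y, hy, y', hy', h2, h3⟩ := hin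
    obtain ⟨j, hj, rfl⟩ := Finset.mem_image.1 hy
    obtain ⟨k, hk, rfl⟩ := Finset.mem_image.1 hy'
    refine ⟨fun h => h1 (Finset.mem_image_of_mem _ h), j, hj, k, hk, ?_, ?_⟩
    · exact (he.lt_iff_lt (hsub b' hb' j hj) (hsub b hb i hi)).1 h2
    · exact (he.lt_iff_lt (hsub b hb i hi) (hsub b' hb' k hk)).1 h3

theorem image_image_id {A : Finset ℕ} {e e' : ℕ → ℕ} (h : ∀ i ∈ A, e' (e i) = i)
    {P : Finset (Finset ℕ)} (hP : ∀ b ∈ P, b ⊆ A) :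
    (P.image (fun b => b.image e)).image (fun b => b.image e') = P := by
  rw [Finset.image_image]
  have : ∀ b ∈ P, ((fun b => Finset.image e' b) ∘ fun b => Finset.image e b) b = id b := by
    intro b hb
    simp only [Function.comp_apply, Finset.image_image, id]
    calc b.image (e' ∘ e) = b.image id := Finset.image_congr fun i hi => h i (hP b hb hi)
      _ = b := Finset.image_id
  rw [Finset.image_congr this, Finset.image_id]

theorem sum_transport (L : Word → ℂ) {s t : Word} {A B : Finset ℕ} {e e' : ℕ → ℕ}
    (he : StrictMonoOn e A) (hl : ∀ i ∈ A, letterAt s (e i) = letterAt t i)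
    (hB : A.image e = B) (h : ∀ i ∈ A, e' (e i) = i) :
    ∑ P ∈ APfin t A, ∏ b ∈ P, L (wordOf t b) = ∑ P ∈ APfin s B, ∏ b ∈ P, L (wordOf s b) := by
  subst hB
  have h' : ∀ j ∈ A.image e, e (e' j) = j := by
    intro j hj
    obtain ⟨i, hi, rfl⟩ := Finset.mem_image.1 hj
    rw [h i hi]
  have hA : (A.image e).image e' = A := by
    rw [Finset.image_image]
    calc A.image (e' ∘ e) = A.image id := Finset.image_congr fun i hi => h i hi
      _ = A := Finset.image_id
  have he' : StrictMonoOn e' (A.image e : Finset ℕ) := by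
    intro x hx y hy hxy
    obtain ⟨i, hi, rfl⟩ := Finset.mem_image.1 (Finset.mem_coe.1 hx)
    obtain ⟨j, hj, rfl⟩ := Finset.mem_image.1 (Finset.mem_coe.1 hy)
    rw [h i hi, h j hj]
    exact (he.lt_iff_lt hi hj).1 hxy
  have hl' : ∀ j ∈ A.image e, letterAt t (e' j) = letterAt s j := by
    intro j hj
    obtain ⟨i, hi, rfl⟩ := Finset.mem_image.1 hj
    rw [h i hi, hl i hi]
  refine Finset.sum_nbij' (fun P => P.image (fun b => b.image e))
    (fun P => P.image (fun b => b.image e')) ?_ ?_ ?_ ?_ ?_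
  · intro P hP; exact AP_image he hl hP
  · intro P hP
    have := AP_image he' hl' hP
    rwa [hA] at this
  · intro P hP
    exact image_image_id h fun b hb => block_subset (mem_APfin.1 hP).1 hb
  · intro P hP
    exact image_image_id h' fun b hb => block_subset (mem_APfin.1 hP).1 hb
  · intro P hP
    have hs : ∀ b ∈ P, b ⊆ A := fun b hb => block_subset (mem_APfin.1 hP).1 hb
    rw [Finset.prod_image]
    · refine Finset.prod_congr rfl fun b hb => ?_
      rw [wordOf_image (he.mono (by exact_mod_cast hs b hb)) fun i hi => hl i (hs b hb hi)]
    · intro b hb b' hb' hbb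
      have : ∀ b ∈ P, (b.image e).image e' = b := by
        intro b hb
        rw [Finset.image_image]
        calc b.image (e' ∘ e) = b.image id := Finset.image_congr fun i hi => h i (hs b hb hi)
          _ = b := Finset.image_id
      rw [← this b hb, ← this b' hb']
      exact congrArg _ hbb

theorem Tsum_eq_M {M L : Word → ℂ} (hM1 : M [] = 1) (hL : IsCumulants M L) (s : Word)
    (g : Finset ℕ) : Tsum L s ∅ g = M (wordOf s g) := by
  rw [Tsum_empty]
  by_cases hg : g = ∅
  · subst hg
    have : APfin s ∅ = {∅} := by
      ext P
      rw [mem_APfin, Finset.mem_singleton, part_iff]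
      constructor
      · rintro ⟨⟨h1, -, h3⟩, -⟩
        refine Finset.eq_empty_of_forall_notMem fun b hb => ?_
        obtain ⟨i, hi⟩ := h1 b hb
        simpa using (h3 i).2 ⟨b, hb, hi⟩
      · rintro rfl
        simp [Admissible]
    rw [this]
    simp [wordOf, hM1]
  · have hlen : (wordOf s g).length = g.card := by simp [wordOf]
    have hne : wordOf s g ≠ [] := by
      intro h
      rw [h] at hlen
      exact hg (Finset.card_eq_zero.1 hlen.symm)
    rw [hL _ hne, hlen]
    symm
    have hsl : (g.sort (· ≤ ·)).length = g.card := Finset.length_sort _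
    have hmem : ∀ x, x ∈ g ↔ x ∈ g.sort (· ≤ ·) := fun x => (Finset.mem_sort _).symm
    have hnd : (g.sort (· ≤ ·)).Nodup := Finset.sort_nodup _ _
    have hlt : (g.sort (· ≤ ·)).Pairwise (· < ·) := Finset.sortedLT_sort g |>.pairwise
    have hw : wordOf s g = (g.sort (· ≤ ·)).map (letterAt s) := rfl
    rw [hw]
    generalize g.sort (· ≤ ·) = l at *
    have hget : ∀ i (hi : i < l.length), l.getD i 0 = l[i] := by
      intro i hi
      simp [hi]
    refine sum_transport L (e := fun i => l.getD i 0)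
      (e' := fun j => l.idxOf j) ?_ ?_ ?_ ?_
    · intro i hi j hj hij
      simp only [Finset.coe_range, Set.mem_Iio] at hi hj
      dsimp only
      rw [hget i (by omega), hget j (by omega)]
      exact List.pairwise_iff_getElem.1 hlt i j _ _ hij
    · intro i hi
      rw [Finset.mem_range] at hi
      rw [hget i (by omega)]
      have : i < (l.map (letterAt s)).length := by simp; omega
      conv_rhs => rw [letterAt, List.getD_eq_getElem _ _ this, List.getElem_map]
    · ext x
      rw [hmem, Finset.mem_image]
      constructor
      · rintro ⟨i, hi, rfl⟩
        rw [Finset.mem_range] at hi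
        rw [hget i (by omega)]
        exact List.getElem_mem _
      · intro hx
        obtain ⟨i, hi, rfl⟩ := List.getElem_of_mem hx
        exact ⟨i, Finset.mem_range.2 (by omega), hget i hi⟩
    · intro i hi
      rw [Finset.mem_range] at hi
      rw [hget i (by omega)]
      exact hnd.idxOf_getElem i _

/-! ### Factorization at a cut -/

theorem Tsum_cut (L : Word → ℂ) (s : Word) (k : ℕ) (K C E : Finset ℕ) (hC : ∀ i ∈ C, i < k)
    (hE : ∀ i ∈ E, k < i) (hK : ∀ i ∈ K, k < i) :
    Tsum L s (insert k K) (C ∪ E) = Tsum L s ∅ C * Tsum L s K E := by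
  rw [Tsum_empty]
  unfold Tsum
  rw [Finset.sum_mul_sum, ← Finset.sum_product']
  have hcase : ∀ P, IsPartitionOn (C ∪ E) P → NoStraddle (insert k K) P → ∀ b ∈ P,
      b ⊆ C ∨ b ⊆ E := by
    intro P hP hns b hb
    have hsub := block_subset hP hb
    by_contra hcon
    rw [not_or, Finset.not_subset, Finset.not_subset] at hcon
    obtain ⟨⟨i, hi, hiC⟩, j, hj, hjE⟩ := hcon
    have hiE : i ∈ E := (Finset.mem_union.1 (hsub hi)).resolve_left hiC
    have hjC : j ∈ C := (Finset.mem_union.1 (hsub hj)).resolve_right hjE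
    exact hns b hb k (by simp) j hj i hi (hC j hjC) (hE i hiE)
  have hdisj : ∀ b : Finset ℕ, b.Nonempty → b ⊆ C → b ⊆ E → False := by
    rintro b ⟨i, hi⟩ h1 h2
    exact absurd (hC i (h1 hi)) (by have := hE i (h2 hi); omega)
  refine Finset.sum_nbij' (fun P => (P.filter (· ⊆ C), P.filter (· ⊆ E)))
    (fun p => p.1 ∪ p.2) ?_ ?_ ?_ ?_ ?_
  · intro P hP
    rw [Finset.mem_filter, mem_APfin] at hP
    obtain ⟨⟨hp, ha⟩, hns⟩ := hP
    have hc := hcase P hp hns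
    have hp' := part_iff.1 hp
    have hadm : ∀ X : Finset ℕ, Admissible s (P.filter (· ⊆ X)) := by
      intro X b hb b' hb'
      exact ha b (Finset.mem_filter.1 hb).1 b' (Finset.mem_filter.1 hb').1
    rw [Finset.mem_product, Finset.mem_filter, mem_APfin, mem_APfin, part_iff, part_iff]
    refine ⟨⟨⟨?_, ?_, ?_⟩, hadm C⟩, ⟨⟨?_, ?_, ?_⟩, hadm E⟩, ?_⟩
    · intro b hb; exact hp'.1 b (Finset.mem_filter.1 hb).1
    · intro b hb b' hb'; exact hp'.2.1 b (Finset.mem_filter.1 hb).1 b' (Finset.mem_filter.1 hb').1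
    · intro i
      constructor
      · intro hi
        obtain ⟨b, hb, hib⟩ := (hp'.2.2 i).1 (Finset.mem_union_left _ hi)
        refine ⟨b, Finset.mem_filter.2 ⟨hb, ?_⟩, hib⟩
        refine (hc b hb).resolve_right fun h => ?_
        have h1 := hE i (h hib)
        have h2 := hC i hi
        omega
      · rintro ⟨b, hb, hib⟩
        exact (Finset.mem_filter.1 hb).2 hib
    · intro b hb; exact hp'.1 b (Finset.mem_filter.1 hb).1
    · intro b hb b' hb'; exact hp'.2.1 b (Finset.mem_filter.1 hb).1 b' (Finset.mem_filter.1 hb').1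
    · intro i
      constructor
      · intro hi
        obtain ⟨b, hb, hib⟩ := (hp'.2.2 i).1 (Finset.mem_union_right _ hi)
        refine ⟨b, Finset.mem_filter.2 ⟨hb, ?_⟩, hib⟩
        refine (hc b hb).resolve_left fun h => ?_
        have h1 := hC i (h hib)
        have h2 := hE i hi
        omega
      · rintro ⟨b, hb, hib⟩
        exact (Finset.mem_filter.1 hb).2 hib
    · intro b hb j hj
      exact hns b (Finset.mem_filter.1 hb).1 j (Finset.mem_insert_of_mem hj)
  · rintro ⟨P, P'⟩ h
    rw [Finset.mem_product, Finset.mem_filter, mem_APfin, mem_APfin] at h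
    obtain ⟨⟨hp, ha⟩, ⟨hp', ha'⟩, hns⟩ := h
    dsimp only at hp ha hp' ha' hns ⊢
    have hs : ∀ b ∈ P, b ⊆ C := fun b hb => block_subset hp hb
    have hs' : ∀ b ∈ P', b ⊆ E := fun b hb => block_subset hp' hb
    rw [part_iff] at hp hp'
    rw [Finset.mem_filter, mem_APfin, part_iff]
    refine ⟨⟨⟨?_, ?_, ?_⟩, ?_⟩, ?_⟩
    · intro b hb
      rcases Finset.mem_union.1 hb with hb | hb
      · exact hp.1 b hb
      · exact hp'.1 b hb
    · intro b hb b' hb' i hi hi'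
      rcases Finset.mem_union.1 hb with hb | hb <;> rcases Finset.mem_union.1 hb' with hb' | hb'
      · exact hp.2.1 b hb b' hb' i hi hi'
      · have := hC i (hs b hb hi); have := hE i (hs' b' hb' hi'); omega
      · have := hC i (hs b' hb' hi'); have := hE i (hs' b hb hi); omega
      · exact hp'.2.1 b hb b' hb' i hi hi'
    · intro i
      rw [Finset.mem_union, hp.2.2, hp'.2.2]
      constructor
      · rintro (⟨b, hb, hi⟩ | ⟨b, hb, hi⟩)
        · exact ⟨b, Finset.mem_union_left _ hb, hi⟩
        · exact ⟨b, Finset.mem_union_right _ hb, hi⟩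
      · rintro ⟨b, hb, hi⟩
        rcases Finset.mem_union.1 hb with hb | hb
        · exact Or.inl ⟨b, hb, hi⟩
        · exact Or.inr ⟨b, hb, hi⟩
    · intro b hb b' hb' hne j hj hw hin
      rcases Finset.mem_union.1 hb with hb | hb <;> rcases Finset.mem_union.1 hb' with hb' | hb'
      · exact ha b hb b' hb' hne j hj hw hin
      · obtain ⟨-, x, hx, y, hy, h1, h2⟩ := hin
        have := hC j (hs b hb hj); have := hE x (hs' b' hb' hx); omega
      · obtain ⟨-, x, hx, y, hy, h1, h2⟩ := hin
        have := hE j (hs' b hb hj); have := hC y (hs b' hb' hy); omega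
      · exact ha' b hb b' hb' hne j hj hw hin
    · intro b hb j hj x hx y hy h1 h2
      rcases Finset.mem_union.1 hb with hb | hb
      · have hx' := hC y (hs b hb hy)
        rcases Finset.mem_insert.1 hj with rfl | hj
        · omega
        · have := hK j hj; omega
      · rcases Finset.mem_insert.1 hj with rfl | hj
        · have := hE x (hs' b hb hx); omega
        · exact hns b hb j hj x hx y hy h1 h2
  · intro P hP
    rw [Finset.mem_filter, mem_APfin] at hP
    have hc := hcase P hP.1.1 hP.2
    dsimp only
    rw [← Finset.filter_or]
    exact Finset.filter_true_of_mem hc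
  · rintro ⟨P, P'⟩ h
    rw [Finset.mem_product, Finset.mem_filter, mem_APfin, mem_APfin] at h
    obtain ⟨⟨hp, -⟩, ⟨hp', -⟩, -⟩ := h
    dsimp only at hp hp' ⊢
    refine Prod.ext ?_ ?_
    · ext b
      simp only [Finset.mem_filter, Finset.mem_union]
      constructor
      · rintro ⟨hb | hb, hbC⟩
        · exact hb
        · exact (hdisj b (hp'.1 b hb) hbC (block_subset hp' hb)).elim
      · intro hb; exact ⟨Or.inl hb, block_subset hp hb⟩
    · ext b
      simp only [Finset.mem_filter, Finset.mem_union]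
      constructor
      · rintro ⟨hb | hb, hbE⟩
        · exact (hdisj b (hp.1 b hb) (block_subset hp hb) hbE).elim
        · exact hb
      · intro hb; exact ⟨Or.inr hb, block_subset hp' hb⟩
  · intro P hP
    rw [Finset.mem_filter, mem_APfin] at hP
    have hc := hcase P hP.1.1 hP.2
    dsimp only
    rw [← Finset.prod_union]
    · rw [← Finset.filter_or, Finset.filter_true_of_mem hc]
    · rw [Finset.disjoint_filter]
      intro b hb h1 h2
      exact hdisj b (hP.1.1.1 b hb) h1 h2

end

section
open Finset
open scoped Classical

/-! ### Decomposition according to the block of the first letter `w` -/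

/-- `D` may be the block of an admissible partition containing the first `w` (at `j0`). -/
def ValidBlock (s : Word) (j0 : ℕ) (D : Finset ℕ) : Prop :=
  j0 ∈ D ∧ ∀ j < s.length, letterAt s j = Letter.w → ¬ InnerPos j D

theorem Tsum_block (L : Word → ℂ) (s : Word) (j0 : ℕ) (hj0 : j0 < s.length) :
    Tsum L s ∅ (range s.length) = ∑ D ∈ (range s.length).powerset,
      if ValidBlock s j0 D then L (wordOf s D) *
        Tsum L s (D.filter (fun j => letterAt s j = Letter.w)) (range s.length \ D) else 0 := by
  rw [Tsum_empty]
  have h1 : ∀ P ∈ APfin s (range s.length), ∏ b ∈ P, L (wordOf s b) =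
      ∑ D ∈ (range s.length).powerset,
        if D ∈ P ∧ j0 ∈ D then ∏ b ∈ P, L (wordOf s b) else 0 := by
    intro P hP
    obtain ⟨hp, -⟩ := mem_APfin.1 hP
    have hp' := part_iff.1 hp
    obtain ⟨D, hD, hjD⟩ := (hp'.2.2 j0).1 (Finset.mem_range.2 hj0)
    rw [Finset.sum_eq_single D]
    · rw [if_pos ⟨hD, hjD⟩]
    · intro D' _ hne
      rw [if_neg]
      rintro ⟨h2, h3⟩
      exact hne (hp'.2.1 D' h2 D hD j0 h3 hjD)
    · intro h
      exact absurd (Finset.mem_powerset.2 (block_subset hp hD)) h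
  rw [Finset.sum_congr rfl h1, Finset.sum_comm]
  refine Finset.sum_congr rfl fun D hD => ?_
  rw [Finset.mem_powerset] at hD
  rw [← Finset.sum_filter]
  split_ifs with hv
  · unfold Tsum
    rw [Finset.mul_sum]
    have hDne : D.Nonempty := ⟨j0, hv.1⟩
    refine Finset.sum_nbij' (fun P => P.erase D) (fun P => insert D P) ?_ ?_ ?_ ?_ ?_
    · intro P hP
      rw [Finset.mem_filter, mem_APfin] at hP
      obtain ⟨⟨hp, ha⟩, hDP, -⟩ := hP
      rw [part_iff] at hp
      rw [Finset.mem_filter, mem_APfin, part_iff]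
      refine ⟨⟨⟨?_, ?_, ?_⟩, ?_⟩, ?_⟩
      · intro b hb; exact hp.1 b (Finset.mem_of_mem_erase hb)
      · intro b hb b' hb'
        exact hp.2.1 b (Finset.mem_of_mem_erase hb) b' (Finset.mem_of_mem_erase hb')
      · intro i
        rw [Finset.mem_sdiff, hp.2.2]
        constructor
        · rintro ⟨⟨b, hb, hi⟩, hiD⟩
          refine ⟨b, Finset.mem_erase.2 ⟨?_, hb⟩, hi⟩
          rintro rfl
          exact hiD hi
        · rintro ⟨b, hb, hi⟩
          rw [Finset.mem_erase] at hb
          exact ⟨⟨b, hb.2, hi⟩, fun h => hb.1 (hp.2.1 b hb.2 D hDP i hi h)⟩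
      · intro b hb b' hb'
        exact ha b (Finset.mem_of_mem_erase hb) b' (Finset.mem_of_mem_erase hb')
      · intro b hb k hk i hi j hj h1 h2
        rw [Finset.mem_filter] at hk
        rw [Finset.mem_erase] at hb
        refine ha D hDP b hb.2 hb.1.symm k hk.1 hk.2 ⟨?_, i, hi, j, hj, h1, h2⟩
        intro hkb
        exact hb.1 (hp.2.1 b hb.2 D hDP k hkb hk.1)
    · intro P hP
      rw [Finset.mem_filter, mem_APfin] at hP
      obtain ⟨⟨hp, ha⟩, hns⟩ := hP
      have hs : ∀ b ∈ P, b ⊆ range s.length \ D := fun b hb => block_subset hp hb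
      have hnD : ∀ b ∈ P, ∀ i ∈ b, i ∉ D := fun b hb i hi => (Finset.mem_sdiff.1 (hs b hb hi)).2
      rw [part_iff] at hp
      rw [Finset.mem_filter, mem_APfin, part_iff]
      refine ⟨⟨⟨?_, ?_, ?_⟩, ?_⟩, Finset.mem_insert_self _ _, hv.1⟩
      · intro b hb
        rcases Finset.mem_insert.1 hb with rfl | hb
        · exact hDne
        · exact hp.1 b hb
      · intro b hb b' hb' i hi hi'
        rcases Finset.mem_insert.1 hb with rfl | hb1 <;>
          rcases Finset.mem_insert.1 hb' with rfl | hb'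
        · rfl
        · exact absurd hi (hnD b' hb' i hi')
        · exact absurd hi' (hnD b hb1 i hi)
        · exact hp.2.1 b hb1 b' hb' i hi hi'
      · intro i
        constructor
        · intro hi
          by_cases hiD : i ∈ D
          · exact ⟨D, Finset.mem_insert_self _ _, hiD⟩
          · obtain ⟨b, hb, hib⟩ := (hp.2.2 i).1 (Finset.mem_sdiff.2 ⟨hi, hiD⟩)
            exact ⟨b, Finset.mem_insert_of_mem hb, hib⟩
        · rintro ⟨b, hb, hib⟩
          rcases Finset.mem_insert.1 hb with rfl | hb
          · exact hD hib
          · exact (Finset.mem_sdiff.1 (hs b hb hib)).1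
      · intro b hb b' hb' hne j hj hw hin
        rcases Finset.mem_insert.1 hb with rfl | hb1 <;>
          rcases Finset.mem_insert.1 hb' with rfl | hb'
        · exact hne rfl
        · obtain ⟨-, x, hx, y, hy, h1, h2⟩ := hin
          exact hns b' hb' j (Finset.mem_filter.2 ⟨hj, hw⟩) x hx y hy h1 h2
        · exact hv.2 j (Finset.mem_range.1 (Finset.mem_sdiff.1 (hs b hb1 hj)).1) hw hin
        · exact ha b hb1 b' hb' hne j hj hw hin
    · intro P hP
      rw [Finset.mem_filter] at hP
      exact Finset.insert_erase hP.2.1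
    · intro P hP
      rw [Finset.mem_filter, mem_APfin] at hP
      refine Finset.erase_insert fun hDP => ?_
      exact (Finset.mem_sdiff.1 (block_subset hP.1.1 hDP hv.1)).2 hv.1
    · intro P hP
      rw [Finset.mem_filter] at hP
      exact (Finset.mul_prod_erase P (fun b => L (wordOf s b)) hP.2.1).symm
  · rw [Finset.filter_false_of_mem, Finset.sum_empty]
    rintro P hP ⟨hDP, hj⟩
    obtain ⟨hp, ha⟩ := mem_APfin.1 hP
    refine hv ⟨hj, fun j hjl hw hin => ?_⟩
    obtain ⟨b, hb, hjb⟩ := ((part_iff.1 hp).2.2 j).1 (Finset.mem_range.2 hjl)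
    refine ha b hb D hDP ?_ j hjb hw hin
    rintro rfl
    exact hin.1 hjb

/-! ### Words of positions -/

theorem wordOf_union (s : Word) {A B : Finset ℕ} (h : ∀ i ∈ A, ∀ j ∈ B, i < j) :
    wordOf s (A ∪ B) = wordOf s A ++ wordOf s B := by
  unfold wordOf
  rw [← List.map_append]
  congr 1
  have h1 : A ∪ B = (A.sort (· ≤ ·) ++ B.sort (· ≤ ·)).toFinset := by
    ext x; simp
  have hnd : (A.sort (· ≤ ·) ++ B.sort (· ≤ ·)).Nodup := by
    rw [List.nodup_append]
    refine ⟨Finset.sort_nodup _ _, Finset.sort_nodup _ _, ?_⟩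
    intro x hx y hy
    exact (h x (by simpa using hx) y (by simpa using hy)).ne
  rw [h1]
  refine (List.toFinset_sort (· ≤ ·) hnd).2 ?_
  rw [List.pairwise_append]
  refine ⟨Finset.pairwise_sort _ _, Finset.pairwise_sort _ _, ?_⟩
  intro x hx y hy
  exact (h x (by simpa using hx) y (by simpa using hy)).le

theorem wordOf_singleton (s : Word) (k : ℕ) : wordOf s {k} = [letterAt s k] := by
  simp [wordOf]

theorem wordOf_insert (s : Word) {B : Finset ℕ} {k : ℕ} (h : ∀ i ∈ B, i < k) :
    wordOf s (insert k B) = wordOf s B ++ [letterAt s k] := by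
  rw [← wordOf_singleton, ← wordOf_union s (by simpa using h), Finset.insert_eq,
    Finset.union_comm]

theorem wordOf_zs (s : Word) {C : Finset ℕ} (h : ∀ i ∈ C, letterAt s i ≠ Letter.w) :
    wordOf s C = zs C.card := by
  have hw : Letter.w ∉ wordOf s C := by
    simp only [wordOf, List.mem_map, not_exists, not_and]
    intro i hi
    exact h i (by simpa using hi)
  rw [zs_of_notMem hw]
  simp [wordOf]

theorem drop_of_cons {s r : Word} {k : ℕ} {x : Letter} (h : s.drop k = x :: r) :
    k < s.length ∧ letterAt s k = x ∧ s.drop (k + 1) = r := by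
  have hk : k < s.length := by
    by_contra hk
    rw [List.drop_eq_nil_of_le (by omega)] at h
    cases h
  rw [List.drop_eq_getElem_cons hk] at h
  injection h with h1 h2
  refine ⟨hk, ?_, h2⟩
  rw [letterAt, List.getD_eq_getElem _ _ hk, h1]

theorem wordOf_Ico (s r : Word) (k : ℕ) (h : s.drop k = r) :
    wordOf s (Ico k s.length) = r := by
  induction r generalizing k with
  | nil =>
    rw [List.drop_eq_nil_iff] at h
    rw [Finset.Ico_eq_empty (by omega)]
    simp [wordOf]
  | cons x r ih =>
    obtain ⟨hk, hx, hr⟩ := drop_of_cons h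
    have : Ico k s.length = {k} ∪ Ico (k + 1) s.length := by
      ext i; simp; omega
    rw [this, wordOf_union, ih _ hr, wordOf_singleton, hx]
    · rfl
    · intro i hi j hj
      simp at hi hj
      omega

theorem mem_wordOf {s : Word} {B : Finset ℕ} {x : Letter} :
    x ∈ wordOf s B ↔ ∃ i ∈ B, letterAt s i = x := by
  simp [wordOf]

/-! ### The recursion -/

theorem block_sum_eq_Kf {M L : Word → ℂ} (hM1 : M [] = 1) (hL : IsCumulants M L) (s : Word)
    (j0 : ℕ) (hj0 : j0 < s.length) (hj0w : letterAt s j0 = Letter.w)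
    (hfirst : ∀ i < j0, letterAt s i ≠ Letter.w) (r : Word) (k : ℕ) (B C : Finset ℕ)
    (hr : s.drop k = r) (hB : ∀ i ∈ B, i < k) (hC : ∀ i ∈ C, i < k)
    (hBw : ∀ i < k, letterAt s i = Letter.w → i ∈ B)
    (hCw : ∀ i ∈ C, letterAt s i ≠ Letter.w) :
    ∑ D ∈ (Ico k s.length).powerset, (if ValidBlock s j0 (B ∪ D) then L (wordOf s (B ∪ D)) *
        Tsum L s (D.filter (fun j => letterAt s j = Letter.w)) ((C ∪ Ico k s.length) \ D) else 0) =
      Kf M L r (wordOf s B) C.card := by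
  induction r generalizing k B C with
  | nil =>
    rw [List.drop_eq_nil_iff] at hr
    have hjB : j0 ∈ B := hBw j0 (by omega) hj0w
    have hv : ValidBlock s j0 B := by
      refine ⟨hjB, fun j hj hw hin => hin.1 (hBw j (by omega) hw)⟩
    have hw : Letter.w ∈ wordOf s B := mem_wordOf.2 ⟨j0, hjB, hj0w⟩
    rw [Finset.Ico_eq_empty (by omega), Finset.powerset_empty, Finset.sum_singleton,
      Finset.union_empty, if_pos hv, Kf, if_pos hw, Finset.filter_empty, Finset.sdiff_empty,
      Finset.union_empty, Tsum_eq_M hM1 hL, wordOf_zs s hCw]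
  | cons x r ih =>
    obtain ⟨hk, hx, hr'⟩ := drop_of_cons hr
    have hI : Ico k s.length = insert k (Ico (k + 1) s.length) := by
      ext i; simp; omega
    have hkI : k ∉ Ico (k + 1) s.length := by simp
    have hkC : k ∉ C := fun h => lt_irrefl _ (hC k h)
    have hkB : k ∉ B := fun h => lt_irrefl _ (hB k h)
    have hDk : ∀ D ∈ (Ico (k + 1) s.length).powerset, ∀ i ∈ D, k < i := by
      intro D hD i hi
      have := Finset.mem_Ico.1 (Finset.mem_powerset.1 hD hi)
      omega
    rw [hI, Finset.sum_powerset_insert hkI]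
    cases x with
    | z =>
      rw [Kf, add_comm]
      have hzne : letterAt s k ≠ Letter.w := by rw [hx]; decide
      congr 1
      · have := ih (k + 1) (insert k B) C hr' (by
            intro i hi
            rcases Finset.mem_insert.1 hi with rfl | hi
            · omega
            · have := hB i hi; omega) (fun i hi => by have := hC i hi; omega) (by
            intro i hi hw
            rcases Nat.lt_succ_iff_lt_or_eq.1 hi with h | rfl
            · exact Finset.mem_insert_of_mem (hBw i h hw)
            · exact absurd hw hzne) hCw
        rw [wordOf_insert s hB, hx] at this
        rw [← this]
        refine Finset.sum_congr rfl fun D hD => ?_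
        have e1 : B ∪ insert k D = insert k B ∪ D := by
          ext i; simp
        have e2 : (insert k D).filter (fun j => letterAt s j = Letter.w) =
            D.filter (fun j => letterAt s j = Letter.w) := by
          rw [Finset.filter_insert, if_neg hzne]
        have e3 : (C ∪ insert k (Ico (k + 1) s.length)) \ insert k D =
            (C ∪ Ico (k + 1) s.length) \ D := by
          ext i
          simp only [Finset.mem_sdiff, Finset.mem_union, Finset.mem_insert]
          by_cases h : i = k
          · subst h; simp [hkC]
          · simp [h]
        rw [e1, e2, e3]
      · have := ih (k + 1) B (insert k C) hr' (fun i hi => by have := hB i hi; omega) (by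
            intro i hi
            rcases Finset.mem_insert.1 hi with rfl | hi
            · omega
            · have := hC i hi; omega) (by
            intro i hi hw
            rcases Nat.lt_succ_iff_lt_or_eq.1 hi with h | rfl
            · exact hBw i h hw
            · exact absurd hw hzne) (by
            intro i hi
            rcases Finset.mem_insert.1 hi with rfl | hi
            · exact hzne
            · exact hCw i hi)
        rw [Finset.card_insert_of_notMem hkC] at this
        rw [← this]
        refine Finset.sum_congr rfl fun D hD => ?_
        have e3 : C ∪ insert k (Ico (k + 1) s.length) = insert k C ∪ Ico (k + 1) s.length := by
          ext i; simp
        rw [e3]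
    | w =>
      rw [Kf, add_comm]
      congr 1
      · have := ih (k + 1) (insert k B) ∅ hr' (by
            intro i hi
            rcases Finset.mem_insert.1 hi with rfl | hi
            · omega
            · have := hB i hi; omega) (by simp) (by
            intro i hi hw
            rcases Nat.lt_succ_iff_lt_or_eq.1 hi with h | rfl
            · exact Finset.mem_insert_of_mem (hBw i h hw)
            · exact Finset.mem_insert_self _ _) (by simp)
        rw [wordOf_insert s hB, hx, Finset.card_empty] at this
        rw [← this, Finset.mul_sum]
        refine Finset.sum_congr rfl fun D hD => ?_
        have e1 : B ∪ insert k D = insert k B ∪ D := by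
          ext i; simp
        have e2 : (insert k D).filter (fun j => letterAt s j = Letter.w) =
            insert k (D.filter (fun j => letterAt s j = Letter.w)) := by
          rw [Finset.filter_insert, if_pos hx]
        have e3 : (C ∪ insert k (Ico (k + 1) s.length)) \ insert k D =
            C ∪ (Ico (k + 1) s.length \ D) := by
          ext i
          simp only [Finset.mem_sdiff, Finset.mem_union, Finset.mem_insert]
          by_cases h : i = k
          · subst h; simp [hkC]
          · by_cases hiC : i ∈ C
            · have : i ∉ D := fun hi => by
                have := hDk D hD i hi; have := hC i hiC; omega
              simp [h, hiC, this]
            · simp [h, hiC]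
        rw [e1, e2, e3, Finset.empty_union, Tsum_cut L s k _ _ _ hC, Tsum_eq_M hM1 hL,
          wordOf_zs s hCw]
        · split_ifs
          · ring
          · ring
        · intro i hi
          have := Finset.mem_Ico.1 (Finset.mem_sdiff.1 hi).1
          omega
        · intro i hi
          exact hDk D hD i (Finset.mem_filter.1 hi).1
      · by_cases hwB : Letter.w ∈ wordOf s B
        · obtain ⟨j, hjB, hjw⟩ := mem_wordOf.1 hwB
          have hjk := hB j hjB
          have hj0k : j0 < k := by
            by_contra hcon
            exact hfirst j (by omega) hjw
          rw [if_pos hwB, Finset.sum_eq_single ∅]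
          · have hv : ValidBlock s j0 B := by
              refine ⟨hBw j0 hj0k hj0w, fun i hi hw hin => ?_⟩
              obtain ⟨h1, -, -, y, hy, -, h2⟩ := hin
              exact h1 (hBw i (h2.trans (hB y hy)) hw)
            rw [Finset.union_empty, if_pos hv, Finset.filter_empty, Finset.sdiff_empty, ← hI,
              Tsum_eq_M hM1 hL, wordOf_union, wordOf_zs s hCw, wordOf_Ico s _ k hr]
            intro i hi i' hi'
            exact (hC i hi).trans_le (Finset.mem_Ico.1 hi').1
          · intro D hD hne
            rw [if_neg]
            rintro ⟨-, hv⟩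
            obtain ⟨d, hd⟩ := Finset.nonempty_iff_ne_empty.2 hne
            refine hv k hk hx ⟨?_, j, Finset.mem_union_left _ hjB, d,
              Finset.mem_union_right _ hd, hjk, hDk D hD d hd⟩
            intro h
            rcases Finset.mem_union.1 h with h | h
            · exact hkB h
            · exact lt_irrefl _ (hDk D hD k h)
          · intro h
            exact absurd (Finset.empty_mem_powerset _) h
        · rw [if_neg hwB]
          refine Finset.sum_eq_zero fun D hD => ?_
          rw [if_neg]
          rintro ⟨hj, -⟩
          have h1 : ¬ j0 < k := fun h => hwB (mem_wordOf.2 ⟨j0, hBw j0 h hj0w, hj0w⟩)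
          have h2 : ¬ k < j0 := fun h => hfirst k h hx
          obtain rfl : j0 = k := by omega
          rcases Finset.mem_union.1 hj with h | h
          · exact hkB h
          · exact lt_irrefl _ (hDk D hD j0 h)

theorem moment_rec {M L : Word → ℂ} (hM1 : M [] = 1) (hL : IsCumulants M L) (s : Word)
    (hs : Letter.w ∈ s) : M s = Kf M L s [] 0 := by
  have hex : ∃ j, j < s.length ∧ letterAt s j = Letter.w := by
    obtain ⟨i, hi, h⟩ := List.getElem_of_mem hs
    exact ⟨i, hi, by rw [letterAt, List.getD_eq_getElem _ _ hi, h]⟩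
  have hspec := Nat.find_spec hex
  have h1 := block_sum_eq_Kf hM1 hL s (Nat.find hex) hspec.1 hspec.2
    (fun i hi hw => Nat.find_min hex hi ⟨hi.trans hspec.1, hw⟩) s 0 ∅ ∅ rfl (by simp) (by simp)
    (by simp) (by simp)
  have h2 := Tsum_block L s (Nat.find hex) hspec.1
  have h3 := Tsum_eq_M hM1 hL s (range s.length)
  rw [Finset.range_eq_Ico, wordOf_Ico s s 0 rfl] at h3
  rw [Finset.range_eq_Ico, h3] at h2
  simp only [Finset.empty_union] at h1
  rw [h2, h1]
  simp [wordOf]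
end

/-- if `‖M{z,w}‖_W < 2 − 1/Q` and `‖L{z,0}‖_W < ∞` (with `W` a weight
function, `W(1) = 1`, `W(st) = W(ts)`, `Q > 1/2`), then all the terms of the identity
`L{z,w} = L{z,0} + (M⋆{z,w} − M{z,0}) ⋆ M⋆⁻¹{z,w}` have finite `‖·‖_{W̃}`-norm,
where `W̃(s) = W(s)Q^{−m(s)}`; in particular `‖M⋆⁻¹{z,w}‖_{W̃} ≤ Q`,
`‖M⋆{z,w}‖_{W̃} < 2 − 1/Q`, `L{z,w} ∈ l¹(S,W̃)` and the identity holds in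
`l¹(S,W̃)`. -/
theorem cumulant_generating_function_formula_l1 (M L : Word → ℂ)
    (hM1 : M [] = 1) (hL : IsCumulants M L)
    (Lgen : Word → ℂ) (hLgen : Lgen [] = 0)
    (hLgen' : ∀ s : Word, s ≠ [] → Lgen s = L s / (nFact s : ℂ))
    (Minv0 : Word → ℂ) (hMinv0supp : ∀ s : Word, Letter.w ∈ s → Minv0 s = 0)
    (hMinv0₁ : ∀ s : Word, conv (restrZ (genFun M)) Minv0 s = if s = [] then 1 else 0)
    (hMinv0₂ : ∀ s : Word, conv Minv0 (restrZ (genFun M)) s = if s = [] then 1 else 0)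
    (G : Word → Word → ℂ) (hG : IsStarAux (genFun M) Minv0 G)
    (Mstarinv : Word → ℂ)
    (hMsi₁ : ∀ s : Word, conv (fun t => G [] t) Mstarinv s = if s = [] then 1 else 0)
    (hMsi₂ : ∀ s : Word, conv Mstarinv (fun t => G [] t) s = if s = [] then 1 else 0)
    (W : Word → ℝ)
    (hWpos : ∀ s, 0 < W s) (hWsub : ∀ s t : Word, W (s ++ t) ≤ W s * W t)
    (hW1 : W [] = 1) (hWcomm : ∀ s t : Word, W (s ++ t) = W (t ++ s))
    (Q : ℝ) (hQ : 1 / 2 < Q)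
    (hMW : normW W (genFun M) < ENNReal.ofReal (2 - 1 / Q))
    (hLW : normW W (restrZ Lgen) < ⊤) :
    normW (fun s => W s * (Q ^ s.count Letter.w)⁻¹) Mstarinv ≤ ENNReal.ofReal Q ∧
      normW (fun s => W s * (Q ^ s.count Letter.w)⁻¹) (fun t => G [] t) <
        ENNReal.ofReal (2 - 1 / Q) ∧
      normW (fun s => W s * (Q ^ s.count Letter.w)⁻¹) Lgen < ⊤ ∧
      normW (fun s => W s * (Q ^ s.count Letter.w)⁻¹) (restrZ Lgen) < ⊤ ∧
      normW (fun s => W s * (Q ^ s.count Letter.w)⁻¹)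
          (fun t => G [] t - restrZ (genFun M) t) < ⊤ ∧
      ∀ s : Word,
        Lgen s =
          restrZ Lgen s +
            conv (fun t => G [] t - restrZ (genFun M) t) Mstarinv s := by

  have hQ0 : 0 < Q := by linarith
  have hf1 : genFun M [] = 1 := by simp [genFun, hM1, nFact]
  -- `Q > 1`
  have hQ1 : 1 < Q := by
    have h1 : (1 : ENNReal) ≤ normW W (genFun M) := by
      calc (1 : ENNReal) = ENNReal.ofReal (W [] * ‖genFun M []‖) := by simp [hf1, hW1]
        _ ≤ _ := ENNReal.le_tsum (f := fun s => ENNReal.ofReal (W s * ‖genFun M s‖)) []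
    have h2 := h1.trans_lt hMW
    rw [← ENNReal.ofReal_one, ENNReal.ofReal_lt_ofReal_iff_of_nonneg zero_le_one] at h2
    have h3 : 1 / Q < 1 := by linarith
    rwa [div_lt_one hQ0] at h3
  have hr1 : restrZ (genFun M) [] = 1 := by simp [restrZ, hf1]
  have hg1 : Minv0 [] = 1 := by
    have := hMinv0₁ []
    rw [conv_nil, hr1] at this
    simpa using this
  -- the inverse of `M{z,0}`
  have hrn : normW W (restrZ (genFun M)) ≤ normW W (genFun M) := by
    refine normW_mono hWpos fun s => ?_
    unfold restrZ
    split_ifs <;> simp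
  have hgn : normW W Minv0 ≤ ENNReal.ofReal Q :=
    normW_inv_le hWpos hWsub hW1 hQ1 hr1 hMinv0₁ (hrn.trans_lt hMW)
  have hgz : ∑' d : ℕ, ENNReal.ofReal (W (zs d) * ‖Minv0 (zs d)‖) ≤ ENNReal.ofReal Q := by
    refine le_trans ?_ hgn
    exact ENNReal.tsum_comp_le_tsum_of_injective
      (f := zs) (fun a b h => by simpa using congrArg List.length h)
      (fun s => ENNReal.ofReal (W s * ‖Minv0 s‖))
  have hGst : ∀ s, G [] s = st (fun n => Minv0 (zs n)) s 0 (genFun M) := fun s =>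
    star_eq_st hG hg1 [] s
  have hstar : normW (fun s => W s * (Q ^ s.count Letter.w)⁻¹) (fun t => G [] t) ≤
      normW W (genFun M) := by
    rw [funext hGst]
    exact star_norm hWpos hWsub hWcomm hQ0 hgz (genFun M)
  -- the new weight
  have hVpos : ∀ s : Word, 0 < W s * (Q ^ s.count Letter.w)⁻¹ := fun s =>
    mul_pos (hWpos s) (by positivity)
  have hVsub : ∀ s t : Word, W (s ++ t) * (Q ^ (s ++ t).count Letter.w)⁻¹ ≤
      (W s * (Q ^ s.count Letter.w)⁻¹) * (W t * (Q ^ t.count Letter.w)⁻¹) := by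
    intro s t
    rw [List.count_append, pow_add, mul_inv]
    calc _ ≤ (W s * W t) * ((Q ^ s.count Letter.w)⁻¹ * (Q ^ t.count Letter.w)⁻¹) :=
          mul_le_mul_of_nonneg_right (hWsub s t) (by positivity)
      _ = _ := by ring
  have hV1 : W [] * (Q ^ ([] : Word).count Letter.w)⁻¹ = 1 := by simp [hW1]
  have hG1 : G [] [] = 1 := by
    rw [hG.1 [] [] (by simp)]; exact hf1
  have hstar' := hstar.trans_lt hMW
  have hinv : normW (fun s => W s * (Q ^ s.count Letter.w)⁻¹) Mstarinv ≤ ENNReal.ofReal Q :=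
    normW_inv_le hVpos hVsub hV1 hQ1 hG1 hMsi₁ hstar'
  have hgad : ∀ n, ∑ p ∈ Finset.HasAntidiagonal.antidiagonal n, genFun M (zs p.1) * Minv0 (zs p.2) =
      if n = 0 then 1 else 0 := by
    intro n
    have := hMinv0₁ (zs n)
    rw [conv_zs] at this
    simpa [restrZ] using this
  have hrecG : ∀ s, G [] s - restrZ (genFun M) s = conv (deltaF Lgen) (fun t => G [] t) s := by
    intro s
    rw [hGst s, funext hGst]
    exact st_eq_conv hLgen' hgad (fun t ht => moment_rec hM1 hL t ht) s
  have hdelta : ∀ s, conv (fun t => G [] t - restrZ (genFun M) t) Mstarinv s = deltaF Lgen s := by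
    intro s
    rw [conv_congr hrecG (fun _ => rfl), conv_assoc]
    exact conv_one _ _ hMsi₁ s
  have hid : ∀ s, Lgen s = restrZ Lgen s +
      conv (fun t => G [] t - restrZ (genFun M) t) Mstarinv s := by
    intro s
    rw [hdelta]
    unfold restrZ deltaF
    split_ifs <;> simp
  have hLz : normW (fun s => W s * (Q ^ s.count Letter.w)⁻¹) (restrZ Lgen) < ⊤ := by
    refine lt_of_le_of_lt (le_of_eq (tsum_congr fun s => ?_)) hLW
    by_cases hs : Letter.w ∈ s
    · simp [restrZ, hs]
    · simp [List.count_eq_zero.2 hs]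
  have hd : normW (fun s => W s * (Q ^ s.count Letter.w)⁻¹)
      (fun t => G [] t - restrZ (genFun M) t) < ⊤ := by
    refine lt_of_le_of_lt (normW_mono hVpos (g := fun t => G [] t) fun s => ?_)
      (hstar'.trans ENNReal.ofReal_lt_top)
    by_cases hs : Letter.w ∈ s
    · simp [restrZ, hs]
    · rw [hG.1 [] s hs]; simp [restrZ, hs]
  refine ⟨hinv, hstar', ?_, hLz, hd, hid⟩
  rw [funext hid]
  refine (normW_add_le hVpos _ _).trans_lt (ENNReal.add_lt_top.2 ⟨hLz, ?_⟩)
  refine (normW_conv_le hVpos hVsub _ _).trans_lt (ENNReal.mul_lt_top hd ?_)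
  exact hinv.trans_lt ENNReal.ofReal_lt_top
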